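/- Let T ∈ 𝓔^ω be orientation-preserving with T(π(0)) = π(0), and let 𝓓 be a dense subset of 𝓒^1 consisting of C^2 functions. Let f_0 ∈ 𝓒^2 be such that K(f_0,T) contains no periodic point of T, and set K̂ = π^{-1}(K(f_0,T)) ∩ [0,1] (so K̂ ⊂ (0,1)). Then there exist δ > 0, points x_1,…,x_Q ∈ K̂, and functions φ_{i,q} ∈ 𝓓 for i ∈ 𝔸 and 1 ≤ q ≤ Q, such that: (i) K̂ ⊆ ⋃_{q=1}^Q (x_q − δ, x_q + δ); and (ii) whenever |x − x_q| ≤ 2δ for some q, then for every i ∈ 𝔸 and every (finite or infinite) word j over 𝔸: |(h^{φ_{i,q}}_j)'(x) − 1| ≤ 1/3 if the first letter of j is i, and |(h^{φ_{i,q}}_j)'(x)| ≤ 1/3 if the first letter of j is not i. -/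

import Mathlib

/-!
The argument has three parts.

**`K(f₀,T)` is non-empty.** Every orbit segment of length `n` is shadowed by a periodic orbit,
whose invariant measure competes in the supremum defining `β`; with the Lipschitz bound on `f₀`
and the contraction of inverse branches this gives `S_n f₀ ≤ n β + const`. In the opposite
direction, above every point `x` some `z` with `T^n z = x` has `S_n f₀ z ≥ n β - const`. Hence the
functions `u_k x = sup {S_n f₀ z - n β : n ≥ k, T^n z = x}` are uniformly bounded and equi-Lipschitz,
and their decreasing limit is a Lipschitz calibrated sub-action `g`. Calibration provides arbitrarily
long orbit segments inside `E_{f₀,T,g}`, so that `Λ_{f₀,T,g}` is non-empty by compactness.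

**`K(f₀,T)` is closed.** All Lipschitz calibrated sub-actions share one Lipschitz constant, so
limits of them along an ultrafilter are again calibrated sub-actions, and points of the sets
`Λ_{f₀,T,g}` converge to points of the set attached to the limit. As no point of the compact set
`K(f₀,T)` is periodic, `dist (T^n z) z` is bounded below on it, uniformly in `1 ≤ n ≤ N`.

**The perturbations.** For `x₀` over `K(f₀,T)` and a letter `i`, let `φ'` be `T'` times a
narrow tent function centred at `τ_i x₀`, minus a small constant which makes the mean vanish,
and approximate `φ` in `C^1` by an element of `𝓓`. In `(h^φ_j)' = ∑ φ'(τ_{j,n}) τ_{j,n}'` the term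
`n = 1` is close to `1` or `0` according to whether the first letter of `j` is `i`. For
`2 ≤ n ≤ N` the point `τ_{j,n} x₀` stays away from `τ_i x₀` on the circle, since otherwise
`T^(n-1) x₀` would be too close to `x₀`; the terms `n > N` are geometrically small. The width of
the tents, and hence `δ`, does not depend on `x₀`, and compactness yields finitely many `x_q`.
-/


open MeasureTheory Topology Filter Set
open scoped UniformConvergence

noncomputable section

/-- The circle `ℝ/ℤ`. -/
abbrev Circle1 : Type := AddCircle (1 : ℝ)

/-- The canonical representative in `[0,1)` of a point of `ℝ/ℤ`. -/
noncomputable def rep (z : Circle1) : ℝ := (AddCircle.equivIco 1 0 z : ℝ)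

/-- The circle map induced by a lift `F : ℝ → ℝ`. -/
noncomputable def cmap (F : ℝ → ℝ) : Circle1 → Circle1 := fun z => ((F (rep z) : ℝ) : Circle1)

/-- The data determining the `C^r` topology: all derivatives of order `≤ r`, viewed in the
space of functions `ℝ → ℝ` with the uniform-convergence topology. -/
noncomputable def crSeq (r : ℕ∞) (f : ℝ → ℝ) : ℕ → (ℝ →ᵤ ℝ) :=
  fun k => UniformFun.ofFun (if (k : ℕ∞) ≤ r then iteratedDeriv k f else 0)

/-- The space `𝓒^r` of `C^r` functions `ℝ/ℤ → ℝ`. -/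
def CrFun (r : ℕ∞) : Type := {f : Circle1 → ℝ // ContDiff ℝ r fun x : ℝ => f ↑x}

/-- The `C^r` topology on `𝓒^r`. -/
noncomputable instance (r : ℕ∞) : TopologicalSpace (CrFun r) :=
  TopologicalSpace.induced (fun f : CrFun r => crSeq r fun x : ℝ => f.1 ↑x) inferInstance

/-- `F : ℝ → ℝ` is a lift of a `C^r` expanding circle map: it is `C^r`, sends `x+1` to
`F x + d` for a fixed integer `d`, and `|(Fⁿ)'| ≥ C λⁿ` for some `C > 0`, `λ > 1`. -/
def ExpandingLift (r : ℕ∞) (F : ℝ → ℝ) : Prop :=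
  ContDiff ℝ r F ∧ (∃ d : ℤ, ∀ x : ℝ, F (x + 1) = F x + d) ∧
    ∃ C > (0 : ℝ), ∃ l > (1 : ℝ), ∀ n : ℕ, 1 ≤ n → ∀ x : ℝ, C * l ^ n ≤ |deriv (F^[n]) x|

/-- The space `𝓔^r` of (lifts of) `C^r` expanding circle maps, with the `C^r` topology. -/
def ExpMap (r : ℕ∞) : Type := {F : ℝ → ℝ // ExpandingLift r F}

noncomputable instance (r : ℕ∞) : TopologicalSpace (ExpMap r) :=
  TopologicalSpace.induced (fun F : ExpMap r => crSeq r F.1) inferInstance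

/-- `μ` is a `T`-invariant Borel probability measure. -/
def InvProb (T : Circle1 → Circle1) (μ : Measure Circle1) : Prop :=
  IsProbabilityMeasure μ ∧ μ.map T = μ

/-- `β(f,T)`, the maximal ergodic average. -/
noncomputable def beta (f : Circle1 → ℝ) (T : Circle1 → Circle1) : ℝ :=
  sSup ((fun μ : Measure Circle1 => ∫ x, f x ∂μ) '' {μ | InvProb T μ})

/-- `μ` is a maximizing measure for `(f,T)`. -/
def IsMaximizing (f : Circle1 → ℝ) (T : Circle1 → Circle1) (μ : Measure Circle1) : Prop :=
  InvProb T μ ∧ ∫ x, f x ∂μ = beta f T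

/-- `μ` is a periodic measure: an invariant measure supported on a periodic orbit. -/
def IsPeriodicMeasure (T : Circle1 → Circle1) (μ : Measure Circle1) : Prop :=
  InvProb T μ ∧ ∃ x : Circle1, ∃ n : ℕ, 0 < n ∧ T^[n] x = x ∧
    μ (Set.range fun k : ℕ => T^[k] x) = 1

/-- `(f,T)` is uniquely maximized by a periodic measure. -/
def UniqMaxPeriodic (f : Circle1 → ℝ) (T : Circle1 → Circle1) : Prop :=
  ∃ μ : Measure Circle1, IsMaximizing f T μ ∧ IsPeriodicMeasure T μ ∧
    ∀ ν : Measure Circle1, IsMaximizing f T ν → ν = μ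

/-- A (continuous) sub-action for `(f,T)`. -/
def IsSubaction (f : Circle1 → ℝ) (T : Circle1 → Circle1) (g : Circle1 → ℝ) : Prop :=
  Continuous g ∧ ∀ x, g x + f x ≤ g (T x) + beta f T

/-- A calibrated sub-action for `(f,T)`. -/
def IsCalibrated (f : Circle1 → ℝ) (T : Circle1 → Circle1) (g : Circle1 → ℝ) : Prop :=
  IsSubaction f T g ∧ ∀ x, ∃ y, T y = x ∧ g y + f y = g x + beta f T

/-- `G_{f,T}`: the set of Lipschitz calibrated sub-actions of `(f,T)`. -/
def Gset (f : Circle1 → ℝ) (T : Circle1 → Circle1) : Set (Circle1 → ℝ) :=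
  {g | (∃ K : NNReal, LipschitzWith K g) ∧ IsCalibrated f T g}

/-- The set `E_{f,T,g}`. -/
def Eset (f : Circle1 → ℝ) (T : Circle1 → Circle1) (g : Circle1 → ℝ) : Set Circle1 :=
  {x | g x + f x = g (T x) + beta f T}

/-- The set `Λ*_{f,T,g}`. -/
def LambdaStar (f : Circle1 → ℝ) (T : Circle1 → Circle1) (g : Circle1 → ℝ) : Set Circle1 :=
  {x | ∀ n : ℕ, T^[n] x ∈ Eset f T g}

/-- The set `Λ_{f,T,g}`. -/
def Lambda (f : Circle1 → ℝ) (T : Circle1 → Circle1) (g : Circle1 → ℝ) : Set Circle1 :=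
  ⋂ n : ℕ, T^[n] '' LambdaStar f T g

/-- The set `K(f,T)`. -/
def Kset (f : Circle1 → ℝ) (T : Circle1 → Circle1) : Set Circle1 :=
  ⋃ g ∈ Gset f T, Lambda f T g

/-- The `(f,T)`-non-wandering set `Ω(f,T)`. -/
def OmegaSet (f : Circle1 → ℝ) (T : Circle1 → Circle1) : Set Circle1 :=
  {x | ∀ ε > (0 : ℝ), ∃ n : ℕ, 1 ≤ n ∧ ∃ z : Circle1, T^[n] z = x ∧ dist z x < ε ∧
    |∑ i ∈ Finset.range n, (f (T^[i] z) - beta f T)| < ε}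

/-- `A` is a periodic orbit of `T`. -/
def IsPeriodicOrbit (T : Circle1 → Circle1) (A : Set Circle1) : Prop :=
  ∃ x : Circle1, (∃ n : ℕ, 0 < n ∧ T^[n] x = x) ∧ A = Set.range fun k : ℕ => T^[k] x

/-- `A` is a `T`-minimal set: a nonempty compact invariant set with no proper nonempty
compact invariant subset. -/
def IsMinimalSet (T : Circle1 → Circle1) (A : Set Circle1) : Prop :=
  A.Nonempty ∧ IsCompact A ∧ T '' A ⊆ A ∧
    ∀ B ⊆ A, B.Nonempty → IsCompact B → T '' B ⊆ B → B = A

/-- The space of `C^r` families of functions on the circle with `q` parameters,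
i.e. maps `(t,x) ↦ f_t(x)` that are jointly `C^r` (the circle variable via a lift). -/
def FamFun (r : ℕ∞) (q : ℕ) : Type :=
  {G : ((Fin q → ℝ) × ℝ) → ℝ // ContDiff ℝ r G ∧ ∀ t x, G (t, x + 1) = G (t, x)}

noncomputable def famSeq (r : ℕ∞) (q : ℕ) (G : ((Fin q → ℝ) × ℝ) → ℝ) :
    (k : ℕ) → (((Fin q → ℝ) × ℝ) →ᵤ (((Fin q → ℝ) × ℝ) [×k]→L[ℝ] ℝ)) :=
  fun k => UniformFun.ofFun (if (k : ℕ∞) ≤ r then iteratedFDeriv ℝ k G else 0)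

/-- The `C^r` topology on the space of `C^r` families. -/
noncomputable instance (r : ℕ∞) (q : ℕ) : TopologicalSpace (FamFun r q) :=
  TopologicalSpace.induced (fun G : FamFun r q => famSeq r q G.1) inferInstance

/-- The member `f_t : ℝ/ℤ → ℝ` of a family, at the parameter `t`. -/
noncomputable def famMem {r : ℕ∞} {q : ℕ} (G : FamFun r q) (t : Fin q → ℝ) : Circle1 → ℝ :=
  fun z => G.1 (t, rep z)

/-- The product `m_∞` over `ℕ` of Lebesgue measure on `[0,1]`, realised as the pushforward of
the Haar probability measure of the compact group `(ℝ/ℤ)^ℕ` under the coordinatewise choice of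
representatives in `[0,1)`. -/
noncomputable def mInfty : Measure (ℕ → ℝ) :=
  Measure.map (fun (t : ℕ → Circle1) (n : ℕ) => rep (t n))
    (MeasureTheory.Measure.addHaarMeasure (⊤ : TopologicalSpace.PositiveCompacts (ℕ → Circle1)))

/-- `S` is an `N`-dimensionally shy subset of a normed real vector space `V`. -/
def NDimShy {V : Type*} [NormedAddCommGroup V] [NormedSpace ℝ V] (N : ℕ) (S : Set V) : Prop :=
  ∃ φ : Fin N → V, ∀ f : V,
    volume {t : Fin N → ℝ | (∀ i, t i ∈ Set.Icc (0 : ℝ) 1) ∧ f + ∑ i, t i • φ i ∈ S} = 0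

/-- `S` is a finite dimensionally shy subset of a normed real vector space `V`. -/
def FinDimShy {V : Type*} [NormedAddCommGroup V] [NormedSpace ℝ V] (S : Set V) : Prop :=
  ∃ N : ℕ, 0 < N ∧ NDimShy N S

/-- `S` is a shy subset of `V`: there are a compactly supported Borel probability measure `μ`
on `V` and a Borel set `S̃ ⊇ S` all of whose translates are `μ`-null. -/
def IsShy {V : Type*} [NormedAddCommGroup V] [NormedSpace ℝ V] (S : Set V) : Prop :=
  letI : MeasurableSpace V := borel V
  ∃ μ : Measure V, μ Set.univ = 1 ∧ (∃ K : Set V, IsCompact K ∧ μ K = 1) ∧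
    ∃ St : Set V, MeasurableSet St ∧ S ⊆ St ∧
      ∀ v : V, μ ((fun x => x + v) ⁻¹' St) = 0

/-- `S` is a prevalent subset of `V`. -/
def IsPrevalent {V : Type*} [NormedAddCommGroup V] [NormedSpace ℝ V] (S : Set V) : Prop :=
  IsShy Sᶜ

/-- `F` is the (normalized) lift of an orientation-preserving real analytic expanding circle
map of degree `d` fixing `π(0)`. -/
def AnalyticExpandingLift (F : ℝ → ℝ) (d : ℕ) : Prop :=
  (∀ x : ℝ, AnalyticAt ℝ F x) ∧ (∀ x : ℝ, F (x + 1) = F x + d) ∧ StrictMono F ∧ F 0 = 0 ∧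
    2 ≤ d ∧ ∃ C > (0 : ℝ), ∃ l > (1 : ℝ), ∀ n : ℕ, 1 ≤ n → ∀ x : ℝ, C * l ^ n ≤ |deriv (F^[n]) x|

/-- The inverse branches `τ_{i,n} = τ_{i_n} ∘ ⋯ ∘ τ_{i_1}`, where `τ = F⁻¹` and
`τ_i(x) = τ(x+i)`; the word `i` is indexed from `0`, so `i 0` is the first letter `i_1`. -/
noncomputable def tauIter (F : ℝ → ℝ) {d : ℕ} (i : ℕ → Fin d) : ℕ → ℝ → ℝ
  | 0, x => x
  | n + 1, x => Function.invFun F (tauIter F i n x + ((i n : ℕ) : ℝ))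

/-- The function `h^f_i` associated to an infinite word `i`. -/
noncomputable def hSum (F : ℝ → ℝ) {d : ℕ} (i : ℕ → Fin d) (f : Circle1 → ℝ) : ℝ → ℝ :=
  fun x => ∑' n : ℕ,
    (f ((tauIter F i (n + 1) x : ℝ) : Circle1) - f ((tauIter F i (n + 1) 0 : ℝ) : Circle1))

/-- The function `h^f_i` associated to a finite word of length `m` (the first `m` letters
of `i`). -/
noncomputable def hSumFin (F : ℝ → ℝ) {d : ℕ} (i : ℕ → Fin d) (m : ℕ) (f : Circle1 → ℝ) :
    ℝ → ℝ :=
  fun x => ∑ n ∈ Finset.range m,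
    (f ((tauIter F i (n + 1) x : ℝ) : Circle1) - f ((tauIter F i (n + 1) 0 : ℝ) : Circle1))

/-- `i ∈ CL(x,K)`: all backward images of `x` along the word `i` lie over `K`. -/
def WordIn (F : ℝ → ℝ) {d : ℕ} (i : ℕ → Fin d) (x : ℝ) (K : Set Circle1) : Prop :=
  ∀ n : ℕ, 1 ≤ n → ((tauIter F i n x : ℝ) : Circle1) ∈ K

/-- `x` (a real, lying over `K`) is an `f`-supercritical value of `K`. -/
def IsSupercriticalValue (F : ℝ → ℝ) (d : ℕ) (f : Circle1 → ℝ) (K : Set Circle1) (x : ℝ) :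
    Prop :=
  ((x : ℝ) : Circle1) ∈ K ∧ ∃ i j : ℕ → Fin d, WordIn F i x K ∧ WordIn F j x K ∧ i 0 ≠ j 0 ∧
    deriv (hSum F i f) x = deriv (hSum F j f) x

/-- `x` is a critical value of `T|K`. -/
def IsCriticalValue (T : Circle1 → Circle1) (K : Set Circle1) (x : Circle1) : Prop :=
  x ∈ K ∧ ∃ y z, y ∈ K ∧ z ∈ K ∧ y ≠ z ∧ T y = x ∧ T z = x

/-- A critical value `x` of `T|K` is regular: on each side of `x` there is a continuous
inverse branch of `T` selecting the unique preimage in `K`. -/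
def IsRegularCriticalValue (T : Circle1 → Circle1) (K : Set Circle1) (x : Circle1) : Prop :=
  ∃ U : Set Circle1, U ∈ 𝓝 x ∧ IsConnected U ∧
    ∀ b ∈ U \ {x}, ∃ s : Circle1 → Circle1,
      ContinuousOn s (connectedComponentIn (U \ {x}) b) ∧
      (∀ y ∈ connectedComponentIn (U \ {x}) b, T (s y) = y) ∧
      (∀ y ∈ K ∩ connectedComponentIn (U \ {x}) b, T ⁻¹' {y} ∩ K = {s y})

/-- `T|K` is Sturmian-like: every critical value is regular. -/
def SturmianLike (T : Circle1 → Circle1) (K : Set Circle1) : Prop :=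
  ∀ x, IsCriticalValue T K x → IsRegularCriticalValue T K x

/-- `f : ℝ/ℤ → ℝ` is a trigonometric polynomial. -/
def IsTrigPoly (f : Circle1 → ℝ) : Prop :=
  ∃ m : ℕ, ∃ a b : ℕ → ℝ, ∀ x : ℝ,
    f ↑x = a 0 + ∑ k ∈ Finset.range m,
      (a (k + 1) * Real.cos (2 * Real.pi * (k + 1) * x) +
        b (k + 1) * Real.sin (2 * Real.pi * (k + 1) * x))

end


/-! ### The circle and lifts of expanding maps -/

theorem coe_surj (z : Circle1) : ∃ x : ℝ, (x : Circle1) = z :=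
  QuotientAddGroup.mk_surjective z

theorem coe_int_eq_zero (k : ℤ) : ((k : ℝ) : Circle1) = 0 := by
  rw [AddCircle.coe_eq_zero_iff]
  exact ⟨k, by simp⟩

theorem coe_add_int (x : ℝ) (k : ℤ) : ((x + k : ℝ) : Circle1) = x := by
  rw [AddCircle.coe_add, coe_int_eq_zero, add_zero]

theorem coe_eq_iff_int (x y : ℝ) : (x : Circle1) = y ↔ ∃ k : ℤ, y = x + k := by
  constructor
  · intro h
    have h0 : ((y - x : ℝ) : Circle1) = 0 := by rw [AddCircle.coe_sub, h, sub_self]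
    rw [AddCircle.coe_eq_zero_iff] at h0
    obtain ⟨k, hk⟩ := h0
    refine ⟨k, ?_⟩
    simp at hk
    linarith
  · rintro ⟨k, rfl⟩
    exact (coe_add_int x k).symm

theorem dist_coe_le (x y : ℝ) : dist (x : Circle1) (y : Circle1) ≤ |x - y| := by
  rw [dist_eq_norm, ← AddCircle.coe_sub, UnitAddCircle.norm_eq]
  have := round_le (x - y) 0
  simpa using this

theorem exists_circle_dist_eq (x y : ℝ) :
    ∃ k : ℤ, dist (x : Circle1) (y : Circle1) = |x - (y + k)| := by
  refine ⟨round (x - y), ?_⟩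
  rw [dist_eq_norm, ← AddCircle.coe_sub, UnitAddCircle.norm_eq]
  congr 1
  ring

/-- The circle distance is realised by suitable real representatives. -/
theorem exists_reps (z w : Circle1) :
    ∃ x y : ℝ, (x : Circle1) = z ∧ (y : Circle1) = w ∧ dist z w = |x - y| := by
  obtain ⟨x, rfl⟩ := coe_surj z
  obtain ⟨y, rfl⟩ := coe_surj w
  obtain ⟨k, hk⟩ := exists_circle_dist_eq x y
  exact ⟨x, y + k, rfl, coe_add_int y k, hk⟩

theorem dist_le_one (z w : Circle1) : dist z w ≤ 1 := by
  rw [dist_eq_norm]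
  have := AddCircle.norm_le_half_period (1 : ℝ) (x := z - w) one_ne_zero
  norm_num at this
  linarith

/-- `|g(x) - g(y)| ≤ L |x - y|` for the lift of `g` to the line; equivalent to `g` being
`L`-Lipschitz on the circle. -/
def LipR (L : ℝ) (g : Circle1 → ℝ) : Prop := ∀ x y : ℝ, |g x - g y| ≤ L * |x - y|

theorem LipR.dist_le {L : ℝ} {g : Circle1 → ℝ} (h : LipR L g) (z w : Circle1) :
    |g z - g w| ≤ L * dist z w := by
  obtain ⟨x, y, rfl, rfl, hd⟩ := exists_reps z w
  rw [hd]
  exact h x y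

theorem LipR.lipschitz {L : ℝ} {g : Circle1 → ℝ} (h : LipR L g) :
    LipschitzWith L.toNNReal g := by
  refine LipschitzWith.of_dist_le_mul fun z w => ?_
  rw [Real.dist_eq]
  refine (h.dist_le z w).trans ?_
  gcongr
  exact Real.le_coe_toNNReal L

theorem LipR.continuous {L : ℝ} {g : Circle1 → ℝ} (h : LipR L g) : Continuous g :=
  h.lipschitz.continuous

theorem continuous_of_lift {Y : Type*} [TopologicalSpace Y] {g : Circle1 → Y}
    (h : Continuous fun x : ℝ => g x) : Continuous g :=
  (QuotientAddGroup.isQuotientMap_mk (AddSubgroup.zmultiples (1 : ℝ))).continuous_iff.2 h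

/-- Quantitative data extracted from an expanding lift `F` of degree `d`: `K rⁿ` bounds the
contraction of inverse branches of `Fⁿ`, and `M` bounds `F'`. -/
structure GoodLift (F : ℝ → ℝ) (d : ℕ) (K r M : ℝ) : Prop where
  two_le : 2 ≤ d
  zero : F 0 = 0
  per : ∀ x, F (x + 1) = F x + d
  mono : StrictMono F
  cont : Continuous F
  surj : Function.Surjective F
  diff : Differentiable ℝ F
  cderiv : Continuous (deriv F)
  deriv_pos : ∀ x, 0 < deriv F x
  deriv_le : ∀ x, deriv F x ≤ M
  K_pos : 0 < K
  r_pos : 0 < r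
  r_lt : r < 1
  M_ge : 1 ≤ M
  exp : ∀ n x y, |x - y| ≤ K * r ^ n * |F^[n] x - F^[n] y|

theorem periodic_bound {g : ℝ → ℝ} (hg : Continuous g) (hp : ∀ x, g (x + 1) = g x) :
    ∃ B, 1 ≤ B ∧ ∀ x, |g x| ≤ B := by
  obtain ⟨B, hB⟩ := isCompact_Icc.exists_bound_of_continuousOn (s := Icc (0 : ℝ) 1)
    hg.continuousOn
  refine ⟨max B 1, le_max_right _ _, fun x => ?_⟩
  obtain ⟨y, hy, hxy⟩ := Function.Periodic.exists_mem_Ico₀ (f := g) (c := 1) hp one_pos x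
  rw [hxy]
  exact (hB y ⟨hy.1, hy.2.le⟩).trans (le_max_left _ _)

theorem AnalyticExpandingLift.good {F : ℝ → ℝ} {d : ℕ} (h : AnalyticExpandingLift F d) :
    ∃ K r M, GoodLift F d K r M := by
  obtain ⟨han, hper, hmono, h0, hd, C, hC, l, hl, hexp⟩ := h
  have hcd : ContDiff ℝ 1 F := contDiff_iff_contDiffAt.2 fun x => (han x).contDiffAt
  have hdiff : Differentiable ℝ F := hcd.differentiable (by norm_num)
  have hcderiv : Continuous (deriv F) := hcd.continuous_deriv (by norm_num)
  have hdper : ∀ x, deriv F (x + 1) = deriv F x := fun x => by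
    rw [← deriv_comp_add_const]
    have : (fun x => F (x + 1)) = fun x => F x + (d : ℝ) := funext hper
    rw [this, deriv_add_const]
  obtain ⟨M, hM1, hM⟩ := periodic_bound hcderiv hdper
  have hl0 : 0 < l := by linarith
  have hnat : ∀ n : ℕ, F n = d * n := by
    intro n
    induction n with
    | zero => simp [h0]
    | succ k ih => push_cast; rw [hper, ih]; ring
  have hneg : ∀ n : ℕ, F (-n) = -(d * n) := by
    intro n
    induction n with
    | zero => simp [h0]
    | succ k ih =>
      have := hper (-((k + 1 : ℕ) : ℝ))
      push_cast at this ⊢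
      rw [show -((k : ℝ) + 1) + 1 = -k by ring, ih] at this
      linarith
  have hd1 : (1 : ℝ) ≤ d := by exact_mod_cast (by omega : 1 ≤ d)
  have hsurj : Function.Surjective F := by
    intro y
    obtain ⟨n, hn⟩ := exists_nat_ge |y|
    have hn0 : (0 : ℝ) ≤ n := Nat.cast_nonneg n
    have h1 : (n : ℝ) ≤ d * n := by nlinarith
    have h2 := abs_le.1 hn
    exact mem_range_of_exists_le_of_exists_ge hdiff.continuous
      ⟨-n, by rw [hneg]; linarith⟩ ⟨n, by rw [hnat]; linarith⟩
  -- lowering the constant makes the expansion estimate valid for `n = 0` as well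
  have hexp' : ∀ n x, min C 1 * l ^ n ≤ deriv F^[n] x := by
    intro n x
    have hm : Monotone F^[n] := (hmono.iterate n).monotone
    have hnn : 0 ≤ deriv F^[n] x := hm.deriv_nonneg
    rcases Nat.eq_zero_or_pos n with rfl | hn
    · simp
    · have := hexp n hn x
      rw [abs_of_nonneg hnn] at this
      refine le_trans ?_ this
      gcongr
      exact min_le_left _ _
  have hC' : 0 < min C 1 := lt_min hC one_pos
  refine ⟨(min C 1)⁻¹, l⁻¹, M, hd, h0, hper, hmono, hdiff.continuous, hsurj, hdiff, hcderiv,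
    fun x => ?_, fun x => (le_abs_self _).trans (hM x), inv_pos.2 hC', inv_pos.2 hl0,
    inv_lt_one_of_one_lt₀ hl, hM1, ?_⟩
  · have := hexp' 1 x
    simp only [Function.iterate_one, pow_one] at this
    exact lt_of_lt_of_le (by positivity) this
  · intro n x y
    wlog hxy : y ≤ x generalizing x y
    · rw [abs_sub_comm x, abs_sub_comm (F^[n] x)]
      exact this y x (le_of_not_ge hxy)
    have := mul_sub_le_image_sub_of_le_deriv (hdiff.iterate n) (hexp' n) hxy
    have hle : F^[n] y ≤ F^[n] x := (hmono.iterate n).monotone hxy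
    rw [abs_of_nonneg (sub_nonneg.2 hxy), abs_of_nonneg (sub_nonneg.2 hle), inv_pow,
      ← mul_inv, inv_mul_eq_div, le_div_iff₀ (by positivity)]
    linarith

namespace GoodLift

variable {F : ℝ → ℝ} {d : ℕ} {K r M : ℝ}

theorem per_int (h : GoodLift F d K r M) (x : ℝ) (k : ℤ) : F (x + k) = F x + d * k := by
  induction k using Int.induction_on with
  | zero => simp
  | succ i ih =>
    push_cast at ih ⊢
    rw [← add_assoc, h.per, ih]; ring
  | pred i ih =>
    have := h.per (x + ((-i - 1 : ℤ) : ℝ))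
    push_cast at this ih ⊢
    rw [show x + (-(i : ℝ) - 1) + 1 = x + -i by ring, ih] at this
    linarith

theorem per_iter (h : GoodLift F d K r M) (n : ℕ) (x : ℝ) (k : ℤ) :
    F^[n] (x + k) = F^[n] x + (d : ℝ) ^ n * k := by
  induction n generalizing x k with
  | zero => simp
  | succ n ih =>
    rw [Function.iterate_succ_apply, Function.iterate_succ_apply, h.per_int]
    have := ih (F x) (d * k)
    push_cast at this
    rw [this]; ring

theorem cmap_coe (h : GoodLift F d K r M) (x : ℝ) : cmap F x = (F x : ℝ) := by
  have hr : ((rep (x : Circle1) : ℝ) : Circle1) = x := AddCircle.coe_equivIco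
  unfold cmap
  generalize rep (x : Circle1) = y at hr
  obtain ⟨k, rfl⟩ := (coe_eq_iff_int _ _).1 hr
  rw [coe_eq_iff_int]
  exact ⟨d * k, by rw [h.per_int]; push_cast; ring⟩

theorem cmap_iter_coe (h : GoodLift F d K r M) (n : ℕ) (x : ℝ) :
    (cmap F)^[n] x = (F^[n] x : ℝ) := by
  induction n generalizing x with
  | zero => rfl
  | succ n ih => rw [Function.iterate_succ_apply, h.cmap_coe, ih, Function.iterate_succ_apply]

theorem cmap_cont (h : GoodLift F d K r M) : Continuous (cmap F) := by
  apply continuous_of_lift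
  simp_rw [h.cmap_coe]
  exact (AddCircle.continuous_mk' 1).comp h.cont

theorem lip (h : GoodLift F d K r M) (n : ℕ) (x y : ℝ) :
    |F^[n] x - F^[n] y| ≤ M ^ n * |x - y| := by
  induction n generalizing x y with
  | zero => simp
  | succ n ih =>
    rw [Function.iterate_succ_apply, Function.iterate_succ_apply]
    refine (ih _ _).trans ?_
    have := Convex.norm_image_sub_le_of_norm_deriv_le (f := F) (s := univ) (x := y) (y := x)
      (C := M) (fun z _ => h.diff z)
      (fun z _ => by rw [Real.norm_eq_abs, abs_of_pos (h.deriv_pos z)]; exact h.deriv_le z)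
      convex_univ (mem_univ _) (mem_univ _)
    rw [Real.norm_eq_abs, Real.norm_eq_abs] at this
    have hM : 0 ≤ M ^ n := pow_nonneg (by linarith [h.M_ge]) n
    calc M ^ n * |F x - F y| ≤ M ^ n * (M * |x - y|) := by gcongr
      _ = _ := by ring

theorem dist_iter_le (h : GoodLift F d K r M) (n : ℕ) (z w : Circle1) :
    dist ((cmap F)^[n] z) ((cmap F)^[n] w) ≤ M ^ n * dist z w := by
  obtain ⟨x, y, rfl, rfl, hd⟩ := exists_reps z w
  rw [hd, h.cmap_iter_coe, h.cmap_iter_coe]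
  exact (dist_coe_le _ _).trans (h.lip n x y)

theorem iter_surj (h : GoodLift F d K r M) (n : ℕ) : Function.Surjective F^[n] :=
  h.surj.iterate n

/-- Two orbits of the lift of length `n` stay exponentially close when seen from their end. -/
theorem shadow_dist (h : GoodLift F d K r M) {n i : ℕ} (hi : i ≤ n) (y y' : ℝ) :
    |F^[i] y - F^[i] y'| ≤ K * r ^ (n - i) * |F^[n] y - F^[n] y'| := by
  have := h.exp (n - i) (F^[i] y) (F^[i] y')
  rwa [← Function.iterate_add_apply, ← Function.iterate_add_apply, Nat.sub_add_cancel hi] at this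

theorem geom_le (h : GoodLift F d K r M) (n : ℕ) :
    ∑ i ∈ Finset.range n, r ^ i ≤ (1 - r)⁻¹ := by
  rw [← tsum_geometric_of_lt_one h.r_pos.le h.r_lt]
  exact (summable_geometric_of_lt_one h.r_pos.le h.r_lt).sum_le_tsum _
    fun i _ => pow_nonneg h.r_pos.le i

theorem sum_dist_le (h : GoodLift F d K r M) (n : ℕ) (y y' : ℝ) :
    ∑ i ∈ Finset.range n, |F^[i] y - F^[i] y'| ≤ K * (1 - r)⁻¹ * |F^[n] y - F^[n] y'| := by
  calc ∑ i ∈ Finset.range n, |F^[i] y - F^[i] y'|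
      ≤ ∑ i ∈ Finset.range n, K * r ^ (n - 1 - i) * |F^[n] y - F^[n] y'| := by
        refine Finset.sum_le_sum fun i hi => ?_
        have hi' := Finset.mem_range.1 hi
        refine (h.shadow_dist hi'.le y y').trans ?_
        have hK := h.K_pos
        refine mul_le_mul_of_nonneg_right (mul_le_mul_of_nonneg_left ?_ hK.le) (abs_nonneg _)
        exact pow_le_pow_of_le_one h.r_pos.le h.r_lt.le (by omega)
    _ = K * (∑ i ∈ Finset.range n, r ^ (n - 1 - i)) * |F^[n] y - F^[n] y'| := by
        rw [Finset.mul_sum, Finset.sum_mul]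
    _ ≤ _ := by
        have hK := h.K_pos
        rw [Finset.sum_range_reflect (fun i => r ^ i)]
        gcongr
        exact h.geom_le n

end GoodLift

/-! ### Birkhoff sums and the maximal ergodic average -/

/-- The Birkhoff sum `∑_{i<n} f(Tⁱ z)`. -/
noncomputable def bsum (f : Circle1 → ℝ) (T : Circle1 → Circle1) (n : ℕ) (z : Circle1) : ℝ :=
  ∑ i ∈ Finset.range n, f (T^[i] z)

theorem bsum_succ (f : Circle1 → ℝ) (T : Circle1 → Circle1) (n : ℕ) (z : Circle1) :
    bsum f T (n + 1) z = bsum f T n z + f (T^[n] z) := by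
  unfold bsum
  rw [Finset.sum_range_succ]

theorem bsum_cont {f : Circle1 → ℝ} {T : Circle1 → Circle1} (hf : Continuous f)
    (hT : Continuous T) (n : ℕ) : Continuous (bsum f T n) :=
  continuous_finsetSum _ fun i _ => hf.comp (hT.iterate i)

/-- The equidistributed measure on a periodic orbit. -/
noncomputable def perMeasure (T : Circle1 → Circle1) (n : ℕ) (p : Circle1) : Measure Circle1 :=
  (n : ENNReal)⁻¹ • ∑ i ∈ Finset.range n, Measure.dirac (T^[i] p)

theorem perMeasure_inv {T : Circle1 → Circle1} (hT : Continuous T) {n : ℕ} (hn : 0 < n)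
    {p : Circle1} (hp : T^[n] p = p) : InvProb T (perMeasure T n p) := by
  constructor
  · constructor
    simp only [perMeasure, Measure.smul_apply, Measure.finsetSum_apply, measure_univ,
      Finset.sum_const, Finset.card_range, smul_eq_mul, nsmul_eq_mul, mul_one]
    exact ENNReal.inv_mul_cancel (by exact_mod_cast hn.ne') (ENNReal.natCast_ne_top n)
  · unfold perMeasure
    rw [Measure.map_smul]
    congr 1
    rw [← Measure.mapₗ_apply_of_measurable hT.measurable, map_sum]
    simp_rw [Measure.mapₗ_apply_of_measurable hT.measurable, Measure.map_dirac' hT.measurable,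
      ← Function.iterate_succ_apply' T]
    obtain ⟨m, rfl⟩ : ∃ m, n = m + 1 := ⟨n - 1, by omega⟩
    rw [Finset.sum_range_succ, Finset.sum_range_succ' (fun i => Measure.dirac (T^[i] p)), hp]
    rfl

theorem perMeasure_integral {f : Circle1 → ℝ} {T : Circle1 → Circle1}
    (n : ℕ) (p : Circle1) : ∫ x, f x ∂(perMeasure T n p) = (n : ℝ)⁻¹ * bsum f T n p := by
  unfold perMeasure bsum
  rw [integral_smul_measure, integral_finsetSum_measure]
  · simp
  · intro i _
    exact integrable_dirac (by simp)

theorem cont_bound {f : Circle1 → ℝ} (hf : Continuous f) : ∃ B, ∀ z, |f z| ≤ B := by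
  obtain ⟨B, hB⟩ := isCompact_univ.exists_bound_of_continuousOn hf.continuousOn
  exact ⟨B, fun z => hB z (mem_univ z)⟩

theorem cont_integrable {f : Circle1 → ℝ} (hf : Continuous f) (μ : Measure Circle1)
    [IsProbabilityMeasure μ] : Integrable f μ := by
  obtain ⟨B, hB⟩ := cont_bound hf
  exact Integrable.of_bound hf.aestronglyMeasurable B (Eventually.of_forall hB)

theorem beta_bdd {f : Circle1 → ℝ} (hf : Continuous f) (T : Circle1 → Circle1) :
    BddAbove ((fun μ : Measure Circle1 => ∫ x, f x ∂μ) '' {μ | InvProb T μ}) := by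
  obtain ⟨B, hB⟩ := cont_bound hf
  refine ⟨B, ?_⟩
  rintro _ ⟨μ, ⟨hμ, -⟩, rfl⟩
  have := integral_mono (μ := μ) (cont_integrable hf μ) (integrable_const B)
    (fun z => (le_abs_self _).trans (hB z))
  simpa using this

theorem bsum_integral {f : Circle1 → ℝ} {T : Circle1 → Circle1} (hf : Continuous f)
    (hT : Continuous T) {μ : Measure Circle1} (hμ : InvProb T μ) (n : ℕ) :
    ∫ x, bsum f T n x ∂μ = n * ∫ x, f x ∂μ := by
  have := hμ.1
  have hmp : MeasurePreserving T μ μ := ⟨hT.measurable, hμ.2⟩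
  unfold bsum
  rw [integral_finsetSum]
  · have : ∀ i ∈ Finset.range n, ∫ x, f (T^[i] x) ∂μ = ∫ x, f x ∂μ := by
      intro i _
      have h2 := (hmp.iterate i).map_eq
      conv_rhs => rw [← h2]
      rw [integral_map (hT.iterate i).measurable.aemeasurable hf.aestronglyMeasurable]
    rw [Finset.sum_congr rfl this]
    simp
  · intro i _
    exact cont_integrable (hf.comp (hT.iterate i)) μ

namespace GoodLift

variable {F : ℝ → ℝ} {d : ℕ} {K r M L : ℝ} {f : Circle1 → ℝ}

theorem cmap_zero (h : GoodLift F d K r M) : cmap F 0 = 0 := by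
  have := h.cmap_coe 0
  rw [h.zero] at this
  simpa using this

/-- Birkhoff sums of a Lipschitz function along two orbits of length `n` differ by at most a
constant multiple of the distance between the endpoints. -/
theorem bsum_diff (h : GoodLift F d K r M) (hL : 0 ≤ L) (hf : LipR L f) (n : ℕ) (y y' : ℝ) :
    |bsum f (cmap F) n y - bsum f (cmap F) n y'| ≤
      L * (K * (1 - r)⁻¹) * |F^[n] y - F^[n] y'| := by
  unfold bsum
  rw [← Finset.sum_sub_distrib]
  calc |∑ i ∈ Finset.range n, (f ((cmap F)^[i] y) - f ((cmap F)^[i] y'))|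
      ≤ ∑ i ∈ Finset.range n, |f ((cmap F)^[i] y) - f ((cmap F)^[i] y')| :=
        Finset.abs_sum_le_sum_abs _ _
    _ ≤ ∑ i ∈ Finset.range n, L * |F^[i] y - F^[i] y'| := by
        refine Finset.sum_le_sum fun i _ => ?_
        rw [h.cmap_iter_coe, h.cmap_iter_coe]
        exact hf _ _
    _ = L * ∑ i ∈ Finset.range n, |F^[i] y - F^[i] y'| := by rw [Finset.mul_sum]
    _ ≤ L * (K * (1 - r)⁻¹ * |F^[n] y - F^[n] y'|) := by
        gcongr
        exact h.sum_dist_le n y y'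
    _ = _ := by ring

/-- Pulling back a nearby point along the same inverse branch of `Tⁿ`. -/
theorem shadow (h : GoodLift F d K r M) (hL : 0 ≤ L) (hf : LipR L f) (n : ℕ) (z : Circle1)
    (w : Circle1) :
    ∃ z', (cmap F)^[n] z' = w ∧
      |bsum f (cmap F) n z - bsum f (cmap F) n z'| ≤
        L * (K * (1 - r)⁻¹) * dist ((cmap F)^[n] z) w ∧
      dist z z' ≤ K * r ^ n * dist ((cmap F)^[n] z) w := by
  obtain ⟨y, rfl⟩ := coe_surj z
  obtain ⟨x, rfl⟩ := coe_surj w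
  rw [h.cmap_iter_coe]
  obtain ⟨k, hk⟩ := exists_circle_dist_eq (F^[n] y) x
  obtain ⟨y', hy'⟩ := h.iter_surj n (x + k)
  refine ⟨y', ?_, ?_, ?_⟩
  · rw [h.cmap_iter_coe, hy', coe_add_int]
  · rw [hk, ← hy']
    exact h.bsum_diff hL hf n y y'
  · rw [hk, ← hy']
    exact (dist_coe_le _ _).trans (h.exp n y y')

theorem W_nonneg (h : GoodLift F d K r M) (hL : 0 ≤ L) : 0 ≤ L * (K * (1 - r)⁻¹) := by
  have := h.K_pos
  have := inv_nonneg.2 (sub_nonneg.2 h.r_lt.le)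
  positivity

/-- Every orbit segment is shadowed by a periodic orbit, whose measure is a competitor in the
definition of `β`; hence Birkhoff sums exceed `n β` by at most a constant. -/
theorem bsum_le (h : GoodLift F d K r M) (hL : 0 ≤ L) (hf : LipR L f) (n : ℕ) (z : Circle1) :
    bsum f (cmap F) n z ≤ n * beta f (cmap F) + L * (K * (1 - r)⁻¹) * 2 := by
  have hW := h.W_nonneg hL
  rcases Nat.eq_zero_or_pos n with rfl | hn
  · simp [bsum]; linarith
  obtain ⟨y, rfl⟩ := coe_surj z
  set s := F^[n] y - y with hs
  set k : ℤ := ⌊s⌋ with hk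
  have hk1 : (k : ℝ) ≤ s := Int.floor_le s
  have hk2 : s < k + 1 := Int.lt_floor_add_one s
  have hcont : Continuous fun x => F^[n] x - x := (h.cont.iterate n).sub continuous_id
  have hy1 : F^[n] (y + 1) - (y + 1) ≥ s + 1 := by
    have := h.per_iter n y 1
    push_cast at this
    rw [this]
    have hd : (2 : ℝ) ≤ (d : ℝ) ^ n := by
      have h2 : (2 : ℝ) ≤ d := by exact_mod_cast h.two_le
      calc (2 : ℝ) ≤ d := h2
        _ = (d : ℝ) ^ 1 := (pow_one _).symm
        _ ≤ (d : ℝ) ^ n := pow_le_pow_right₀ (by linarith) hn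
    linarith
  obtain ⟨y', ⟨hy'1, hy'2⟩, hy'⟩ : ∃ y' ∈ Icc y (y + 1), F^[n] y' - y' = k + 1 :=
    intermediate_value_Icc (by linarith) hcont.continuousOn ⟨by linarith, by linarith⟩
  have hper : (cmap F)^[n] (y' : Circle1) = y' := by
    rw [h.cmap_iter_coe]
    have : F^[n] y' = y' + ((k + 1 : ℤ) : ℝ) := by push_cast; linarith
    rw [this, coe_add_int]
  have hfc := hf.continuous
  have hle : ∫ x, f x ∂(perMeasure (cmap F) n y') ≤ beta f (cmap F) :=
    le_csSup (beta_bdd hfc _) ⟨_, perMeasure_inv h.cmap_cont hn hper, rfl⟩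
  rw [perMeasure_integral] at hle
  have hn' : (0 : ℝ) < n := by exact_mod_cast hn
  rw [inv_mul_le_iff₀ hn'] at hle
  have hdiff := h.bsum_diff hL hf n y y'
  have h2 : |F^[n] y - F^[n] y'| ≤ 2 := by rw [abs_le]; constructor <;> linarith
  have h3 := mul_le_mul_of_nonneg_left h2 hW
  have := (abs_le.1 hdiff).2
  linarith

/-- Over every point and for every length there is an orbit segment whose Birkhoff sum is at
least `n β` up to a constant. -/
theorem exists_bsum_ge (h : GoodLift F d K r M) (hL : 0 ≤ L) (hf : LipR L f) (n : ℕ)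
    (x : Circle1) : ∃ z, (cmap F)^[n] z = x ∧
      n * beta f (cmap F) - L * (K * (1 - r)⁻¹) ≤ bsum f (cmap F) n z := by
  have hW := h.W_nonneg hL
  have hfc := hf.continuous
  have hbc := bsum_cont hfc h.cmap_cont n
  obtain ⟨p, -, hp⟩ := isCompact_univ.exists_isMaxOn ⟨(0 : Circle1), mem_univ _⟩ hbc.continuousOn
  have hp' : ∀ z, bsum f (cmap F) n z ≤ bsum f (cmap F) n p := fun z => hp (mem_univ z)
  have hmain : n * beta f (cmap F) ≤ bsum f (cmap F) n p := by
    rcases Nat.eq_zero_or_pos n with rfl | hn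
    · simp [bsum]
    have hn' : (0 : ℝ) < n := by exact_mod_cast hn
    rw [mul_comm, ← le_div_iff₀ hn']
    refine csSup_le ?_ ?_
    · exact ⟨_, _, perMeasure_inv (n := 1) (p := 0) h.cmap_cont one_pos
        (by simpa using h.cmap_zero), rfl⟩
    · rintro _ ⟨μ, hμ, rfl⟩
      have := hμ.1
      have := integral_mono (μ := μ) (cont_integrable hbc μ)
        (integrable_const (bsum f (cmap F) n p)) hp'
      rw [bsum_integral hfc h.cmap_cont hμ] at this
      simp only [integral_const, probReal_univ, one_smul] at this
      rw [le_div_iff₀ hn', mul_comm]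
      exact this
  obtain ⟨z, hz, hz1, -⟩ := h.shadow hL hf n p x
  refine ⟨z, hz, ?_⟩
  have h1 := mul_le_mul_of_nonneg_left (dist_le_one ((cmap F)^[n] p) x) hW
  have := (abs_le.1 hz1).2
  linarith

/-! ### Existence of a Lipschitz calibrated sub-action -/

/-- The normalized Birkhoff sums `S_n f(z) - n β` over all `z` with `Tⁿ z = x`, `n ≥ k`. -/
def valSet (f : Circle1 → ℝ) (T : Circle1 → Circle1) (k : ℕ) (x : Circle1) : Set ℝ :=
  {v | ∃ n, k ≤ n ∧ ∃ z, T^[n] z = x ∧ v = bsum f T n z - n * beta f T}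

theorem exists_calibrated (h : GoodLift F d K r M) (hL : 0 ≤ L) (hf : LipR L f) :
    (Gset f (cmap F)).Nonempty := by
  set W := L * (K * (1 - r)⁻¹) with hWdef
  have hW : 0 ≤ W := h.W_nonneg hL
  set T := cmap F with hT
  set β := beta f T with hβ
  have hbdd : ∀ k x, BddAbove (valSet f T k x) := by
    intro k x
    refine ⟨W * 2, ?_⟩
    rintro _ ⟨n, -, z, -, rfl⟩
    have := h.bsum_le hL hf n z
    linarith
  have hlow : ∀ k x, ∃ v ∈ valSet f T k x, -W ≤ v := by
    intro k x
    obtain ⟨z, hz, hz1⟩ := h.exists_bsum_ge hL hf k x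
    exact ⟨_, ⟨k, le_rfl, z, hz, rfl⟩, by linarith⟩
  have hne : ∀ k x, (valSet f T k x).Nonempty := fun k x =>
    let ⟨v, hv, _⟩ := hlow k x; ⟨v, hv⟩
  set u : ℕ → Circle1 → ℝ := fun k x => sSup (valSet f T k x) with hu
  have hulow : ∀ k x, -W ≤ u k x := fun k x => by
    obtain ⟨v, hv, hv1⟩ := hlow k x
    exact hv1.trans (le_csSup (hbdd k x) hv)
  have huanti : ∀ k m x, k ≤ m → u m x ≤ u k x := by
    intro k m x hkm
    refine csSup_le_csSup (hbdd k x) (hne m x) ?_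
    rintro _ ⟨n, hn, z, hz, rfl⟩
    exact ⟨n, hkm.trans hn, z, hz, rfl⟩
  have hulip1 : ∀ k x y, u k x ≤ u k y + W * dist x y := by
    intro k x y
    refine csSup_le (hne k x) ?_
    rintro _ ⟨n, hn, z, hz, rfl⟩
    obtain ⟨z', hz', hz1, -⟩ := h.shadow hL hf n z y
    have hmem : bsum f T n z' - n * β ≤ u k y :=
      le_csSup (hbdd k y) ⟨n, hn, z', hz', rfl⟩
    have h1 := (abs_le.1 hz1).2
    rw [← hT, hz] at h1
    linarith
  have hucont : ∀ k, Continuous (u k) := by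
    intro k
    refine LipschitzWith.continuous (K := W.toNNReal) (LipschitzWith.of_le_add_mul _ ?_)
    intro x y
    rw [Real.coe_toNNReal _ hW]
    exact hulip1 k x y
  -- `u k` decreases to the sub-action `g`
  set g : Circle1 → ℝ := fun x => ⨅ k, u k x with hg
  have hgb : ∀ x, BddBelow (range fun k => u k x) := fun x =>
    ⟨-W, by rintro _ ⟨k, rfl⟩; exact hulow k x⟩
  have hgle : ∀ k x, g x ≤ u k x := fun k x => ciInf_le (hgb x) k
  have hglip : LipschitzWith W.toNNReal g := by
    refine LipschitzWith.of_le_add_mul _ fun x y => ?_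
    rw [Real.coe_toNNReal _ hW]
    have : g x - W * dist x y ≤ g y := le_ciInf fun k => by
      have := hulip1 k x y
      have := hgle k x
      linarith
    linarith
  have hstep : ∀ k y, u k y + f y ≤ u (k + 1) (T y) + β := by
    intro k y
    have : u k y ≤ u (k + 1) (T y) + β - f y := by
      refine csSup_le (hne k y) ?_
      rintro _ ⟨n, hn, z, hz, rfl⟩
      have hmem : bsum f T (n + 1) z - ((n + 1 : ℕ) : ℝ) * β ≤ u (k + 1) (T y) := by
        refine le_csSup (hbdd _ _) ⟨n + 1, by omega, z, ?_, rfl⟩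
        rw [Function.iterate_succ_apply', hz]
      rw [bsum_succ, hz] at hmem
      push_cast at hmem
      linarith
    linarith
  have hTc : Continuous T := h.cmap_cont
  have hfc := hf.continuous
  refine ⟨g, ⟨_, hglip⟩, ⟨hglip.continuous, fun y => ?_⟩, fun x => ?_⟩
  · have : g y + f y - β ≤ g (T y) := le_ciInf fun k => by
      have h1 := hstep k y
      have h2 := huanti k (k + 1) (T y) (by omega)
      have h3 := hgle k y
      linarith
    linarith
  · -- nested compact sets of preimages almost realising the supremum
    let C : ℕ → Set Circle1 := fun k => {y | T y = x ∧ g x + β ≤ u k y + f y}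
    have hCc : ∀ k, IsClosed (C k) := fun k =>
      (isClosed_eq hTc continuous_const).inter
        (isClosed_le continuous_const ((hucont k).add hfc))
    have hCne : ∀ k, (C k).Nonempty := by
      intro k
      have hpc : IsCompact {y | T y = x} := (isClosed_eq hTc continuous_const).isCompact
      obtain ⟨z0, hz0, -⟩ := h.exists_bsum_ge hL hf 1 x
      obtain ⟨y, hy, hymax⟩ := hpc.exists_isMaxOn ⟨z0, by simpa using hz0⟩
        ((hucont k).add hfc).continuousOn
      refine ⟨y, hy, ?_⟩
      have : u (k + 1) x ≤ u k y + f y - β := by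
        refine csSup_le (hne _ _) ?_
        rintro _ ⟨n, hn, z, hz, rfl⟩
        obtain ⟨m, rfl⟩ : ∃ m, n = m + 1 := ⟨n - 1, by omega⟩
        rw [Function.iterate_succ_apply'] at hz
        have h1 : u k (T^[m] z) + f (T^[m] z) ≤ u k y + f y := hymax hz
        have h2 : bsum f T m z - m * β ≤ u k (T^[m] z) :=
          le_csSup (hbdd _ _) ⟨m, by omega, z, rfl, rfl⟩
        rw [bsum_succ]
        push_cast
        linarith
      have := hgle (k + 1) x
      linarith
    obtain ⟨y, hy⟩ := IsCompact.nonempty_iInter_of_sequence_nonempty_isCompact_isClosed C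
      (fun k y hy => ⟨hy.1, hy.2.trans (by have := huanti k (k + 1) y (by omega); linarith)⟩)
      hCne (hCc 0).isCompact hCc
    rw [mem_iInter] at hy
    have hTy : T y = x := (hy 0).1
    refine ⟨y, hTy, le_antisymm ?_ ?_⟩
    · have : g y + f y - β ≤ g x := le_ciInf fun k => by
        have h1 := hstep k y
        have h2 := huanti k (k + 1) (T y) (by omega)
        have h3 := hgle k y
        rw [hTy] at h1 h2
        linarith
      linarith
    · have : g x + β - f y ≤ g y := le_ciInf fun k => by
        have := (hy k).2
        linarith
      linarith

end GoodLift

/-! ### The set `K(f,T)` is nonempty and compact -/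

theorem exists_lipR {f : Circle1 → ℝ} (hf : ContDiff ℝ 1 fun x : ℝ => f x) :
    ∃ L, 0 ≤ L ∧ LipR L f := by
  obtain ⟨L, hL, hb⟩ := periodic_bound (g := deriv fun x : ℝ => f x)
    (hf.continuous_deriv (by norm_num)) (fun x => by
      rw [← deriv_comp_add_const]
      congr 1
      funext y
      rw [AddCircle.coe_add_period])
  refine ⟨L, by linarith, fun x y => ?_⟩
  have := Convex.norm_image_sub_le_of_norm_deriv_le (f := fun x : ℝ => f x) (s := univ)
    (x := y) (y := x) (C := L) (fun z _ => hf.differentiable (by norm_num) z)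
    (fun z _ => hb z) convex_univ (mem_univ _) (mem_univ _)
  simpa only [Real.norm_eq_abs] using this

section Chains

variable {f g : Circle1 → ℝ} {T : Circle1 → Circle1}

theorem calibrated_chain (hcal : IsCalibrated f T g) (n : ℕ) (x : Circle1) :
    ∃ z, T^[n] z = x ∧ ∀ i < n, T^[i] z ∈ Eset f T g := by
  induction n generalizing x with
  | zero => exact ⟨x, rfl, fun i hi => absurd hi (Nat.not_lt_zero i)⟩
  | succ n ih =>
    obtain ⟨y, hy, hE⟩ := hcal.2 x
    obtain ⟨z, hz, hzE⟩ := ih y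
    refine ⟨z, by rw [Function.iterate_succ_apply', hz, hy], fun i hi => ?_⟩
    rcases Nat.lt_succ_iff_lt_or_eq.1 hi with hi | rfl
    · exact hzE i hi
    · rw [hz]
      change g y + f y = g (T y) + beta f T
      rw [hy, hE]

theorem chain_telescope (n : ℕ) (z : Circle1) (hz : ∀ i < n, T^[i] z ∈ Eset f T g) :
    g z + bsum f T n z = g (T^[n] z) + n * beta f T := by
  induction n with
  | zero => simp [bsum]
  | succ n ih =>
    have h1 := ih fun i hi => hz i (by omega)
    have h2 : g (T^[n] z) + f (T^[n] z) = g (T (T^[n] z)) + beta f T := hz n (by omega)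
    rw [bsum_succ, Function.iterate_succ_apply']
    push_cast
    linarith

theorem subaction_telescope (hsub : IsSubaction f T g) (n : ℕ) (z : Circle1) :
    g z + bsum f T n z ≤ g (T^[n] z) + n * beta f T := by
  induction n with
  | zero => simp [bsum]
  | succ n ih =>
    have h2 := hsub.2 (T^[n] z)
    rw [bsum_succ, Function.iterate_succ_apply']
    push_cast
    linarith

theorem lambdaStar_nonempty (hT : Continuous T) (hf : Continuous f)
    (hcal : IsCalibrated f T g) : (LambdaStar f T g).Nonempty := by
  have hg := hcal.1.1
  have hE : IsClosed (Eset f T g) :=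
    isClosed_eq (hg.add hf) ((hg.comp hT).add continuous_const)
  let C : ℕ → Set Circle1 := fun n => ⋂ i, ⋂ (_ : i < n), T^[i] ⁻¹' Eset f T g
  have hCc : ∀ n, IsClosed (C n) := fun n =>
    isClosed_iInter fun i => isClosed_iInter fun _ => hE.preimage (hT.iterate i)
  obtain ⟨x, hx⟩ := IsCompact.nonempty_iInter_of_sequence_nonempty_isCompact_isClosed C
    (fun n x hx => by
      simp only [C, mem_iInter] at hx ⊢
      exact fun i hi => hx i (by omega))
    (fun n => by
      obtain ⟨z, -, hz⟩ := calibrated_chain hcal n 0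
      exact ⟨z, by simp only [C, mem_iInter]; exact hz⟩)
    (hCc 0).isCompact hCc
  refine ⟨x, fun n => ?_⟩
  simp only [C, mem_iInter] at hx
  exact hx (n + 1) n (by omega)

theorem lambda_nonempty (hT : Continuous T) (hf : Continuous f)
    (hcal : IsCalibrated f T g) : (Lambda f T g).Nonempty := by
  have hg := hcal.1.1
  have hE : IsClosed (Eset f T g) :=
    isClosed_eq (hg.add hf) ((hg.comp hT).add continuous_const)
  have hS : IsCompact (LambdaStar f T g) := by
    have : LambdaStar f T g = ⋂ i, T^[i] ⁻¹' Eset f T g := by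
      ext x; simp [LambdaStar]
    rw [this]
    exact (isClosed_iInter fun i => hE.preimage (hT.iterate i)).isCompact
  have himg : ∀ n, IsCompact (T^[n] '' LambdaStar f T g) := fun n => hS.image (hT.iterate n)
  refine IsCompact.nonempty_iInter_of_sequence_nonempty_isCompact_isClosed _ ?_
    (fun n => (lambdaStar_nonempty hT hf hcal).image _) (himg 0) fun n => (himg n).isClosed
  rintro n _ ⟨x, hx, rfl⟩
  refine ⟨T x, fun k => ?_, ?_⟩
  · have := hx (k + 1)
    rwa [Function.iterate_succ_apply] at this
  · rw [Function.iterate_succ_apply]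

end Chains

namespace GoodLift

variable {F : ℝ → ℝ} {d : ℕ} {K r M L : ℝ} {f : Circle1 → ℝ}

theorem kset_nonempty (h : GoodLift F d K r M) (hL : 0 ≤ L) (hf : LipR L f) :
    (Kset f (cmap F)).Nonempty := by
  obtain ⟨g, hg⟩ := h.exists_calibrated hL hf
  obtain ⟨x, hx⟩ := lambda_nonempty h.cmap_cont hf.continuous hg.2
  exact ⟨x, mem_iUnion₂.2 ⟨g, hg, hx⟩⟩

/-- All Lipschitz calibrated sub-actions share a Lipschitz constant. -/
theorem calibrated_lip (h : GoodLift F d K r M) (hL : 0 ≤ L) (hf : LipR L f)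
    {g : Circle1 → ℝ} (hg : g ∈ Gset f (cmap F)) (x y : Circle1) :
    |g x - g y| ≤ L * (K * (1 - r)⁻¹) * dist x y := by
  have key : ∀ x y, g x - g y ≤ L * (K * (1 - r)⁻¹) * dist x y := by
    intro x y
    obtain ⟨⟨A, hA⟩, hcal⟩ := hg
    have hn : ∀ n : ℕ, g x - g y ≤
        L * (K * (1 - r)⁻¹) * dist x y + A * (K * r ^ n * dist x y) := by
      intro n
      obtain ⟨z, hz, hzE⟩ := calibrated_chain hcal n x
      have h1 := chain_telescope n z hzE
      obtain ⟨z', hz', hb, hd⟩ := h.shadow hL hf n z y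
      have h2 := subaction_telescope hcal.1 n z'
      rw [hz] at h1 hb hd
      rw [hz'] at h2
      have h3 := hA.dist_le_mul z z'
      rw [Real.dist_eq] at h3
      have h4 := mul_le_mul_of_nonneg_left hd A.2
      have h5 := (abs_le.1 h3).2
      have h6 := (abs_le.1 hb).2
      change (A : ℝ) * dist z z' ≤ A * _ at h4
      linarith
    have hlim : Tendsto (fun n : ℕ =>
        L * (K * (1 - r)⁻¹) * dist x y + A * (K * r ^ n * dist x y)) atTop
        (𝓝 (L * (K * (1 - r)⁻¹) * dist x y + A * (K * 0 * dist x y))) :=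
      (((((tendsto_pow_atTop_nhds_zero_of_lt_one h.r_pos.le h.r_lt).const_mul K).mul_const
        (dist x y)).const_mul (A : ℝ)).const_add _)
    simpa using ge_of_tendsto' hlim hn
  rw [abs_le]
  have h1 := key x y
  have h2 := key y x
  rw [dist_comm] at h2
  constructor <;> linarith

/-- `K(f,T)` is closed: along an ultrafilter on `K(f,T)` the normalized calibrated sub-actions,
being uniformly Lipschitz, have a pointwise limit which is again calibrated. -/
theorem kset_closed (h : GoodLift F d K r M) (hL : 0 ≤ L) (hf : LipR L f) :
    IsClosed (Kset f (cmap F)) := by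
  set W := L * (K * (1 - r)⁻¹) with hWdef
  have hW : 0 ≤ W := h.W_nonneg hL
  have hTc := h.cmap_cont
  set T := cmap F with hT
  have hfc := hf.continuous
  refine isClosed_of_closure_subset fun x hx => ?_
  obtain ⟨u, huK, hux⟩ := mem_closure_iff_ultrafilter.1 hx
  have hex : ∀ z, ∃ g, z ∈ Kset f T → g ∈ Gset f T ∧ z ∈ Lambda f T g := by
    intro z
    by_cases hz : z ∈ Kset f T
    · obtain ⟨g, hg, hz'⟩ := mem_iUnion₂.1 hz
      exact ⟨g, fun _ => ⟨hg, hz'⟩⟩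
    · exact ⟨0, fun h => absurd h hz⟩
  choose G hG using hex
  have hGlip : ∀ z ∈ Kset f T, ∀ v w, |(G z v - G z 0) - (G z w - G z 0)| ≤ W * dist v w := by
    intro z hz v w
    rw [sub_sub_sub_cancel_right]
    exact h.calibrated_lip hL hf (hG z hz).1 v w
  have hlim : ∀ w, ∃ c, Tendsto (fun z => G z w - G z 0) u (𝓝 c) := by
    intro w
    have hmem : Icc (-W) W ∈ u.map (fun z => G z w - G z 0) := by
      rw [Ultrafilter.mem_map]
      filter_upwards [huK] with z hz
      have h1 := hGlip z hz w 0
      rw [sub_self, sub_zero] at h1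
      have h2 := mul_le_mul_of_nonneg_left (dist_le_one w 0) hW
      exact abs_le.1 (by linarith)
    obtain ⟨c, -, hc⟩ := isCompact_Icc.ultrafilter_le_nhds' _ hmem
    exact ⟨c, hc⟩
  choose g hg using hlim
  have hconv : ∀ (y : Circle1 → Circle1) (w : Circle1), Tendsto y u (𝓝 w) →
      Tendsto (fun z => G z (y z) - G z 0) u (𝓝 (g w)) := by
    intro y w hy
    have h0 : Tendsto (fun z => W * dist (y z) w) u (𝓝 0) := by
      have := (hy.dist (tendsto_const_nhds (x := w))).const_mul W
      simpa using this
    have h1 : Tendsto (fun z => (G z (y z) - G z 0) - (G z w - G z 0)) u (𝓝 0) := by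
      refine squeeze_zero_norm' ?_ h0
      filter_upwards [huK] with z hz
      exact hGlip z hz _ _
    have := h1.add (hg w)
    simpa using this
  have hsub : ∀ (y : Circle1 → Circle1), ∃ w, Tendsto y u (𝓝 w) := fun y =>
    ⟨_, (u.map y).le_nhds_lim⟩
  have hEq : ∀ (y : Circle1 → Circle1) (w : Circle1), Tendsto y u (𝓝 w) →
      (∀ z ∈ Kset f T, y z ∈ Eset f T (G z)) → w ∈ Eset f T g := by
    intro y w hy hyE
    have h1 := (hconv y w hy).add ((hfc.tendsto w).comp hy)
    have h2 := (hconv (fun z => T (y z)) (T w) ((hTc.tendsto w).comp hy)).add_const (beta f T)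
    refine tendsto_nhds_unique_of_eventuallyEq h1 h2 ?_
    filter_upwards [huK] with z hz
    have : G z (y z) + f (y z) = G z (T (y z)) + beta f T := hyE z hz
    simp only [Function.comp]
    linarith
  have hglip : LipschitzWith W.toNNReal g := by
    refine LipschitzWith.of_dist_le_mul fun v w => ?_
    rw [Real.coe_toNNReal _ hW, Real.dist_eq]
    refine le_of_tendsto ((hg v).sub (hg w)).abs ?_
    filter_upwards [huK] with z hz
    exact hGlip z hz v w
  have hgG : g ∈ Gset f T := by
    refine ⟨⟨_, hglip⟩, ⟨hglip.continuous, fun w => ?_⟩, fun w => ?_⟩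
    · refine le_of_tendsto_of_tendsto ((hg w).add_const (f w))
        ((hg (T w)).add_const (beta f T)) ?_
      filter_upwards [huK] with z hz
      have := (hG z hz).1.2.1.2 w
      linarith
    · have hpre : ∀ z, ∃ y, z ∈ Kset f T → T y = w ∧ G z y + f y = G z w + beta f T := by
        intro z
        by_cases hz : z ∈ Kset f T
        · obtain ⟨y, hy⟩ := (hG z hz).1.2.2 w
          exact ⟨y, fun _ => hy⟩
        · exact ⟨0, fun h => absurd h hz⟩
      choose y hy using hpre
      obtain ⟨v, hv⟩ := hsub y
      have hTv : T v = w := by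
        refine tendsto_nhds_unique_of_eventuallyEq ((hTc.tendsto v).comp hv)
          (tendsto_const_nhds (x := w)) ?_
        filter_upwards [huK] with z hz
        exact (hy z hz).1
      have hvE : v ∈ Eset f T g := hEq y v hv fun z hz => by
        change G z (y z) + f (y z) = G z (T (y z)) + beta f T
        rw [(hy z hz).1, (hy z hz).2]
      refine ⟨v, hTv, ?_⟩
      have : g v + f v = g (T v) + beta f T := hvE
      rwa [hTv] at this
  refine mem_iUnion₂.2 ⟨g, hgG, mem_iInter.2 fun n => ?_⟩
  have hpre : ∀ z, ∃ v, z ∈ Kset f T → v ∈ LambdaStar f T (G z) ∧ T^[n] v = z := by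
    intro z
    by_cases hz : z ∈ Kset f T
    · obtain ⟨v, hv⟩ := mem_iInter.1 (hG z hz).2 n
      exact ⟨v, fun _ => hv⟩
    · exact ⟨0, fun h => absurd h hz⟩
  choose v hv using hpre
  obtain ⟨w, hw⟩ := hsub v
  refine ⟨w, fun k => ?_, ?_⟩
  · exact hEq (fun z => T^[k] (v z)) _ (((hTc.iterate k).tendsto w).comp hw)
      fun z hz => (hv z hz).1 k
  · refine tendsto_nhds_unique_of_eventuallyEq (((hTc.iterate n).tendsto w).comp hw)
      (show Tendsto id u (𝓝 x) from hux) ?_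
    filter_upwards [huK] with z hz
    exact (hv z hz).2

end GoodLift

/-! ### Inverse branches -/

namespace GoodLift

variable {F : ℝ → ℝ} {d : ℕ} {K r M : ℝ}

theorem F_inv (h : GoodLift F d K r M) (x : ℝ) : F (Function.invFun F x) = x :=
  Function.rightInverse_invFun h.surj x

theorem tau_iter (h : GoodLift F d K r M) (j : ℕ → Fin d) (n : ℕ) :
    ∃ k : ℤ, ∀ x, F^[n] (tauIter F j n x) = x + k := by
  induction n with
  | zero => exact ⟨0, fun x => by simp [tauIter]⟩
  | succ n ih =>
    obtain ⟨k, hk⟩ := ih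
    refine ⟨k + (d : ℤ) ^ n * ((j n : ℕ) : ℤ), fun x => ?_⟩
    have := h.per_iter n (tauIter F j n x) ((j n : ℕ) : ℤ)
    rw [Function.iterate_succ_apply]
    simp only [tauIter]
    rw [h.F_inv]
    push_cast at this ⊢
    rw [this, hk]
    ring

theorem tau_lip (h : GoodLift F d K r M) (j : ℕ → Fin d) (n : ℕ) (x y : ℝ) :
    |tauIter F j n x - tauIter F j n y| ≤ K * r ^ n * |x - y| := by
  obtain ⟨k, hk⟩ := h.tau_iter j n
  have := h.exp n (tauIter F j n x) (tauIter F j n y)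
  rwa [hk, hk, add_sub_add_right_eq_sub] at this

theorem inv_hasDeriv (h : GoodLift F d K r M) (x : ℝ) :
    HasDerivAt (Function.invFun F) (deriv F (Function.invFun F x))⁻¹ x := by
  have hlip : LipschitzWith (K * r).toNNReal (Function.invFun F) := by
    refine LipschitzWith.of_dist_le_mul fun x y => ?_
    rw [Real.coe_toNNReal _ (mul_pos h.K_pos h.r_pos).le, Real.dist_eq, Real.dist_eq]
    have := h.exp 1 (Function.invFun F x) (Function.invFun F y)
    simpa [h.F_inv] using this
  exact HasDerivAt.of_local_left_inverse hlip.continuous.continuousAt (h.diff _).hasDerivAt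
    (h.deriv_pos _).ne' (Eventually.of_forall h.F_inv)

theorem tau_diff (h : GoodLift F d K r M) (j : ℕ → Fin d) (n : ℕ) :
    Differentiable ℝ (tauIter F j n) := by
  induction n with
  | zero => exact differentiable_id
  | succ n ih =>
    have hi : Differentiable ℝ (Function.invFun F) := fun x => (h.inv_hasDeriv x).differentiableAt
    exact hi.comp (ih.add_const _)

theorem tau_deriv_le (h : GoodLift F d K r M) (j : ℕ → Fin d) (n : ℕ) (x : ℝ) :
    |deriv (tauIter F j n) x| ≤ K * r ^ n := by
  have hK : 0 ≤ K * r ^ n := mul_nonneg h.K_pos.le (pow_nonneg h.r_pos.le n)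
  have hlip : LipschitzWith (K * r ^ n).toNNReal (tauIter F j n) := by
    refine LipschitzWith.of_dist_le_mul fun x y => ?_
    rw [Real.coe_toNNReal _ hK, Real.dist_eq, Real.dist_eq]
    exact h.tau_lip j n x y
  have := norm_deriv_le_of_lipschitz (x₀ := x) hlip
  rwa [Real.coe_toNNReal _ hK] at this

theorem tau_one_deriv (h : GoodLift F d K r M) (j : ℕ → Fin d) (x : ℝ) :
    deriv (tauIter F j 1) x = (deriv F (tauIter F j 1 x))⁻¹ := by
  have := (h.inv_hasDeriv (x + ((j 0 : ℕ) : ℝ))).comp_add_const x ((j 0 : ℕ) : ℝ)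
  exact this.deriv

end GoodLift

/-! ### Approximate bump functions -/

/-- A tent of height `1` and half-width `ε` around `y`. -/
noncomputable def tent (ε : ℝ) (y z : Circle1) : ℝ := max 0 (1 - dist z y / ε)

theorem tent_cont (ε : ℝ) (y : Circle1) : Continuous (tent ε y) := by
  unfold tent
  fun_prop

theorem tent_nonneg (ε : ℝ) (y z : Circle1) : 0 ≤ tent ε y z := le_max_left _ _

theorem tent_le_one {ε : ℝ} (hε : 0 < ε) (y z : Circle1) : tent ε y z ≤ 1 := by
  refine max_le zero_le_one ?_
  have : 0 ≤ dist z y / ε := by positivity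
  linarith

theorem tent_eq_zero {ε : ℝ} (hε : 0 < ε) {y z : Circle1} (h : ε ≤ dist z y) :
    tent ε y z = 0 := by
  refine max_eq_left ?_
  have : 1 ≤ dist z y / ε := (one_le_div hε).2 h
  linarith

theorem tent_sub_one {ε : ℝ} (hε : 0 < ε) (y z : Circle1) :
    |tent ε y z - 1| ≤ dist z y / ε := by
  have h1 := tent_le_one hε y z
  have h2 : 1 - dist z y / ε ≤ tent ε y z := le_max_right _ _
  rw [abs_le]
  have : 0 ≤ dist z y / ε := by positivity
  constructor <;> linarith

theorem tent_integral_le {ε : ℝ} (hε : 0 < ε) (y : Circle1) :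
    ∫ x in (0 : ℝ)..1, tent ε y x ≤ 2 * ε := by
  have h := AddCircle.intervalIntegral_preimage 1 0 (tent ε y)
  rw [zero_add] at h
  rw [h]
  calc ∫ z, tent ε y z ≤ ∫ z, (Metric.closedBall y ε).indicator 1 z := by
        refine integral_mono_of_nonneg (Eventually.of_forall (tent_nonneg ε y))
          ((integrable_const (1 : ℝ)).indicator Metric.isClosed_closedBall.measurableSet)
          (Eventually.of_forall fun z => ?_)
        by_cases hz : z ∈ Metric.closedBall y ε
        · simp only [indicator_of_mem hz]
          exact tent_le_one hε y z
        · simp only [indicator_of_notMem hz]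
          rw [Metric.mem_closedBall, not_le] at hz
          exact (tent_eq_zero hε hz.le).le
    _ = (volume (Metric.closedBall y ε)).toReal := by
        rw [integral_indicator_one Metric.isClosed_closedBall.measurableSet]
        rfl
    _ ≤ 2 * ε := by
        rw [AddCircle.volume_closedBall, ENNReal.toReal_ofReal (by positivity)]
        exact min_le_right _ _

/-- A `C¹` function on the circle with derivative `F'` times a narrow tent, up to the small
constant needed to make the derivative have mean zero. -/
theorem GoodLift.exists_bump {F : ℝ → ℝ} {d : ℕ} {K r M : ℝ} (h : GoodLift F d K r M)
    {ε : ℝ} (hε : 0 < ε) (y : Circle1) :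
    ∃ (φ : CrFun 1) (m : ℝ), |m| ≤ M * (2 * ε) ∧
      ∀ x : ℝ, deriv (fun x : ℝ => φ.1 x) x = deriv F x * tent ε y x - m := by
  set ψ : ℝ → ℝ := fun x => deriv F x * tent ε y x with hψ
  have htc : Continuous fun x : ℝ => tent ε y x :=
    (tent_cont ε y).comp (AddCircle.continuous_mk' 1)
  have hψc : Continuous ψ := h.cderiv.mul htc
  set m := ∫ x in (0 : ℝ)..1, ψ x with hm
  have hψp : Function.Periodic (fun x => ψ x - m) 1 := by
    intro x
    have h1 : deriv F (x + 1) = deriv F x := by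
      rw [← deriv_comp_add_const]
      have : (fun x => F (x + 1)) = fun x => F x + (d : ℝ) := funext h.per
      rw [this, deriv_add_const]
    simp only [hψ]
    rw [h1, AddCircle.coe_add_period]
  have hc : Continuous fun x => ψ x - m := hψc.sub continuous_const
  have hInt : ∀ a b, IntervalIntegrable (fun x => ψ x - m) volume a b := fun a b =>
    hc.intervalIntegrable a b
  set Φ : ℝ → ℝ := fun x => ∫ t in (0 : ℝ)..x, (ψ t - m) with hΦ
  have hΦd : ∀ x, HasDerivAt Φ (ψ x - m) x := fun x =>
    intervalIntegral.integral_hasDerivAt_right (hInt 0 x)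
      (hc.stronglyMeasurableAtFilter _ _) hc.continuousAt
  have hΦp : Function.Periodic Φ 1 := by
    intro x
    have h1 := intervalIntegral.integral_add_adjacent_intervals (hInt 0 x) (hInt x (x + 1))
    have h2 := hψp.intervalIntegral_add_eq x 0
    have h3 : ∫ t in (0 : ℝ)..(0 + 1), (ψ t - m) = 0 := by
      rw [zero_add, intervalIntegral.integral_sub (hψc.intervalIntegrable _ _)
        (continuous_const.intervalIntegrable _ _)]
      simp [← hm]
    simp only [hΦ]
    linarith
  have hΦ' : deriv Φ = fun x => ψ x - m := funext fun x => (hΦd x).deriv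
  have hlift : (fun x : ℝ => (hΦp.lift : Circle1 → ℝ) x) = Φ := funext fun x => hΦp.lift_coe x
  have hcd : ContDiff ℝ 1 Φ := by
    rw [contDiff_one_iff_deriv]
    exact ⟨fun x => (hΦd x).differentiableAt, by rw [hΦ']; exact hc⟩
  refine ⟨⟨hΦp.lift, by rw [hlift]; exact hcd⟩, m, ?_, fun x => ?_⟩
  · have hM : 0 ≤ M := by linarith [h.M_ge]
    have hnn : 0 ≤ m := intervalIntegral.integral_nonneg zero_le_one fun x _ =>
      mul_nonneg (h.deriv_pos x).le (tent_nonneg _ _ _)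
    rw [abs_of_nonneg hnn]
    calc m ≤ ∫ x in (0 : ℝ)..1, M * tent ε y x := by
          refine intervalIntegral.integral_mono_on zero_le_one (hψc.intervalIntegrable _ _)
            ((continuous_const.mul htc).intervalIntegrable _ _) fun x _ => ?_
          exact mul_le_mul_of_nonneg_right (h.deriv_le x) (tent_nonneg _ _ _)
      _ = M * ∫ x in (0 : ℝ)..1, tent ε y x := intervalIntegral.integral_const_mul _ _
      _ ≤ _ := mul_le_mul_of_nonneg_left (tent_integral_le hε y) hM
  · change deriv (fun x : ℝ => (hΦp.lift : Circle1 → ℝ) x) x = _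
    rw [hlift, hΦ']

theorem dense_approx {D : Set (CrFun 1)} (hD : Dense D) (φ : CrFun 1) {η : ℝ} (hη : 0 < η) :
    ∃ g ∈ D, ∀ x : ℝ,
      |deriv (fun x : ℝ => g.1 x) x - deriv (fun x : ℝ => φ.1 x) x| ≤ η := by
  let e : CrFun 1 → (ℝ →ᵤ ℝ) := fun g => crSeq 1 (fun x : ℝ => g.1 x) 1
  have hi : Continuous fun g : CrFun 1 => crSeq 1 fun x : ℝ => g.1 x := continuous_induced_dom
  have he : Continuous e := (continuous_apply 1).comp hi
  have hnh := (UniformFun.hasBasis_nhds ℝ ℝ (e φ)).mem_of_mem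
    (i := {p : ℝ × ℝ | dist p.1 p.2 < η}) (Metric.dist_mem_uniformity hη)
  obtain ⟨g, hgD, hg⟩ := hD.inter_nhds_nonempty (he.continuousAt.preimage_mem_nhds hnh)
  refine ⟨g, hgD, fun x => ?_⟩
  have hx := hg x
  have hval : ∀ g : CrFun 1, UniformFun.toFun (e g) x = deriv (fun x : ℝ => g.1 x) x := by
    intro g
    simp [e, crSeq, iteratedDeriv_one]
  simp only [mem_ofPred_eq, hval] at hx
  rw [abs_sub_comm, ← Real.dist_eq]
  exact hx.le

/-! ### Differentiating `h^f_j` and the final estimate -/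

theorem partial_sum_bound {a b : ℕ → ℝ} {e : ℝ} (h0 : |a 0 - e| ≤ b 0)
    (h1 : ∀ n, 1 ≤ n → |a n| ≤ b n) (hb : ∀ m, ∑ n ∈ Finset.range m, b n ≤ 1 / 3)
    (m : ℕ) (hm : 1 ≤ m) : |∑ n ∈ Finset.range m, a n - e| ≤ 1 / 3 := by
  obtain ⟨m, rfl⟩ : ∃ k, m = k + 1 := ⟨m - 1, by omega⟩
  refine le_trans ?_ (hb (m + 1))
  rw [Finset.sum_range_succ', Finset.sum_range_succ' b, add_sub_assoc]
  refine (abs_add_le _ _).trans (add_le_add ?_ h0)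
  exact (Finset.abs_sum_le_sum_abs _ _).trans
    (Finset.sum_le_sum fun n _ => h1 (n + 1) (by omega))

namespace GoodLift

variable {F : ℝ → ℝ} {d : ℕ} {K r M : ℝ}

theorem deriv_h_bound (h : GoodLift F d K r M) {φ : Circle1 → ℝ}
    (hφ : Differentiable ℝ fun x : ℝ => φ x) {B : ℝ}
    (hB : ∀ x, |deriv (fun x : ℝ => φ x) x| ≤ B) (j : ℕ → Fin d) (x e : ℝ)
    (hsum : ∀ m : ℕ, 1 ≤ m → |∑ n ∈ Finset.range m,
      deriv (fun x : ℝ => φ x) (tauIter F j (n + 1) x) * deriv (tauIter F j (n + 1)) x - e|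
        ≤ 1 / 3) :
    |deriv (hSum F j φ) x - e| ≤ 1 / 3 ∧
      ∀ m : ℕ, 1 ≤ m → |deriv (hSumFin F j m φ) x - e| ≤ 1 / 3 := by
  set a : ℕ → ℝ → ℝ := fun n x =>
    deriv (fun x : ℝ => φ x) (tauIter F j (n + 1) x) * deriv (tauIter F j (n + 1)) x with ha
  have hB0 : 0 ≤ B := (abs_nonneg _).trans (hB 0)
  have hder : ∀ n y, HasDerivAt (fun x : ℝ => φ ((tauIter F j (n + 1) x : ℝ) : Circle1) -
      φ ((tauIter F j (n + 1) 0 : ℝ) : Circle1)) (a n y) y := by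
    intro n y
    have h1 : HasDerivAt (fun x : ℝ => φ x) _ (tauIter F j (n + 1) y) := (hφ _).hasDerivAt
    exact (HasDerivAt.comp y h1 (h.tau_diff j (n + 1) y).hasDerivAt).sub_const _
  have hbd : ∀ n y, ‖a n y‖ ≤ B * (K * r ^ (n + 1)) := by
    intro n y
    rw [Real.norm_eq_abs, ha]
    simp only [abs_mul]
    exact mul_le_mul (hB _) (h.tau_deriv_le j _ _) (abs_nonneg _) hB0
  have hsu : Summable fun n : ℕ => B * (K * r ^ (n + 1)) :=
    (((summable_nat_add_iff 1).2
      (summable_geometric_of_lt_one h.r_pos.le h.r_lt)).mul_left K).mul_left B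
  constructor
  · have hd : HasDerivAt (hSum F j φ) (∑' n, a n x) x :=
      hasDerivAt_tsum hsu hder hbd (y₀ := 0) (by simp) x
    rw [hd.deriv]
    have hs : Summable fun n => a n x := Summable.of_norm_bounded hsu fun n => hbd n x
    have hlim := (hs.hasSum.tendsto_sum_nat.sub_const e).abs
    exact le_of_tendsto hlim (eventually_atTop.2 ⟨1, hsum⟩)
  · intro m hm
    have hd : HasDerivAt (hSumFin F j m φ) (∑ n ∈ Finset.range m, a n x) x :=
      HasDerivAt.fun_sum fun n _ => hder n x
    rw [hd.deriv]
    exact hsum m hm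

/-- If `x₀` is far from being periodic of period at most `N`, the backward images of points
near `x₀` of order at most `N` avoid a neighbourhood of `τ_i(x₀)`, except `τ_i` itself. -/
theorem separation (h : GoodLift F d K r M) {c ε δ x₀ : ℝ} {N : ℕ}
    (hc : ∀ n, 1 ≤ n → n ≤ N → c ≤ dist ((cmap F)^[n] (x₀ : Circle1)) x₀)
    (hε1 : M ^ N * (2 * ε) < c) (hε2 : M * (2 * ε) < 1) (hδ : K * (2 * δ) ≤ ε)
    {x : ℝ} (hx : |x - x₀| ≤ 2 * δ) (i : Fin d) (j : ℕ → Fin d) {p : ℕ} (hp1 : 1 ≤ p)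
    (hpN : p ≤ N) (hpi : 2 ≤ p ∨ j 0 ≠ i) :
    ε ≤ dist ((tauIter F j p x : ℝ) : Circle1)
      ((Function.invFun F (x₀ + ((i : ℕ) : ℝ)) : ℝ) : Circle1) := by
  by_contra! hlt
  have hM0 : 0 ≤ M := by linarith [h.M_ge]
  set y := Function.invFun F (x₀ + ((i : ℕ) : ℝ)) with hy
  have hFy : F y = x₀ + ((i : ℕ) : ℝ) := h.F_inv _
  have hmove : |tauIter F j p x₀ - tauIter F j p x| ≤ ε := by
    refine (h.tau_lip j p x₀ x).trans ?_
    rw [abs_sub_comm]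
    have hrp : r ^ p ≤ 1 := pow_le_one₀ h.r_pos.le h.r_lt.le
    calc K * r ^ p * |x - x₀| ≤ K * 1 * (2 * δ) :=
          mul_le_mul (mul_le_mul_of_nonneg_left hrp h.K_pos.le) hx (abs_nonneg _)
            (by linarith [h.K_pos])
      _ ≤ ε := by rw [mul_one]; exact hδ
  have hd2 : dist ((tauIter F j p x₀ : ℝ) : Circle1) (y : Circle1) < 2 * ε := by
    have h1 := dist_triangle ((tauIter F j p x₀ : ℝ) : Circle1) ((tauIter F j p x : ℝ) : Circle1)
      (y : Circle1)
    have h2 := dist_coe_le (tauIter F j p x₀) (tauIter F j p x)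
    linarith
  by_cases hp2 : 2 ≤ p
  · -- applying `T^p` turns the coincidence into an approximate period `p - 1` of `x₀`
    have hTy : (cmap F)^[p] (y : Circle1) = (cmap F)^[p - 1] (x₀ : Circle1) := by
      obtain ⟨q, rfl⟩ : ∃ q, p = q + 1 := ⟨p - 1, by omega⟩
      rw [Function.iterate_succ_apply, h.cmap_coe, hFy, Nat.add_sub_cancel]
      congr 1
      exact_mod_cast coe_add_int x₀ ((i : ℕ) : ℤ)
    have hTt : (cmap F)^[p] ((tauIter F j p x₀ : ℝ) : Circle1) = x₀ := by
      obtain ⟨k, hk⟩ := h.tau_iter j p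
      rw [h.cmap_iter_coe, hk, coe_add_int]
    have h1 := h.dist_iter_le p ((tauIter F j p x₀ : ℝ) : Circle1) (y : Circle1)
    rw [hTy, hTt, dist_comm] at h1
    have h2 := hc (p - 1) (by omega) (by omega)
    have h3 : M ^ p ≤ M ^ N := pow_le_pow_right₀ h.M_ge hpN
    have h4 : M ^ p * dist ((tauIter F j p x₀ : ℝ) : Circle1) (y : Circle1) ≤ M ^ N * (2 * ε) :=
      mul_le_mul h3 hd2.le dist_nonneg (pow_nonneg hM0 N)
    linarith
  · -- for `p = 1` distinct branches are separated because `F` is `M`-Lipschitz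
    have hp : p = 1 := by omega
    subst hp
    have hji : j 0 ≠ i := hpi.resolve_left hp2
    obtain ⟨k, hk⟩ := exists_circle_dist_eq (tauIter F j 1 x₀) y
    rw [hk] at hd2
    have h1 := h.lip 1 (tauIter F j 1 x₀) (y + k)
    simp only [Function.iterate_one, pow_one] at h1
    have h2 : F (tauIter F j 1 x₀) = x₀ + ((j 0 : ℕ) : ℝ) := by
      simp only [tauIter]
      exact h.F_inv _
    rw [h.per_int, hFy, h2] at h1
    have h3 : |(((j 0 : ℕ) : ℤ) - ((i : ℕ) : ℤ) - d * k : ℤ)| < 1 := by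
      have h4 := mul_le_mul_of_nonneg_left hd2.le hM0
      have h5 : |x₀ + ((j 0 : ℕ) : ℝ) - (x₀ + ((i : ℕ) : ℝ) + d * k)| < 1 := by linarith
      have h6 : x₀ + ((j 0 : ℕ) : ℝ) - (x₀ + ((i : ℕ) : ℝ) + d * k) =
          (((((j 0 : ℕ) : ℤ) - ((i : ℕ) : ℤ) - d * k : ℤ)) : ℝ) := by push_cast; ring
      rw [h6] at h5
      exact_mod_cast h5
    rw [Int.abs_lt_one_iff] at h3
    apply hji
    have h7 : ((j 0 : ℕ) : ℤ) ≡ ((i : ℕ) : ℤ) [ZMOD d] :=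
      (Int.modEq_iff_dvd.2 ⟨-k, by linarith⟩)
    have h8 : (j 0 : ℕ) ≡ (i : ℕ) [MOD d] := Int.natCast_modEq_iff.1 h7
    exact Fin.ext (h8.eq_of_lt_of_lt (j 0).2 i.2)

theorem tail_sum (h : GoodLift F d K r M) (N m : ℕ) :
    ∑ n ∈ Finset.range m, (if N ≤ n then r ^ n else 0) ≤ r ^ N * (1 - r)⁻¹ := by
  have hnn : ∀ n : ℕ, 0 ≤ if N ≤ n then r ^ n else 0 := fun n => by
    split_ifs
    · exact pow_nonneg h.r_pos.le n
    · exact le_rfl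
  calc ∑ n ∈ Finset.range m, (if N ≤ n then r ^ n else 0)
      ≤ ∑ n ∈ Finset.range (N + m), (if N ≤ n then r ^ n else 0) :=
        Finset.sum_le_sum_of_subset_of_nonneg
          (Finset.range_subset_range.2 (by omega)) fun n _ _ => hnn n
    _ = r ^ N * ∑ n ∈ Finset.range m, r ^ n := by
        rw [Finset.sum_range_add, Finset.mul_sum, Finset.sum_eq_zero, zero_add]
        · exact Finset.sum_congr rfl fun n _ => by rw [if_pos (by omega), pow_add]
        · intro n hn
          rw [if_neg (by have := Finset.mem_range.1 hn; omega)]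
    _ ≤ _ := mul_le_mul_of_nonneg_left (h.geom_le m) (pow_nonneg h.r_pos.le N)

/-- The local construction: a function in `D` which is transversal near `x₀` for the letter
`i`. -/
theorem exists_local (h : GoodLift F d K r M) {D : Set (CrFun 1)} (hD : Dense D)
    {c ε δ η x₀ : ℝ} {N : ℕ} (hN : 1 ≤ N) (hε : 0 < ε) (hη : 0 < η)
    (hc : ∀ n, 1 ≤ n → n ≤ N → c ≤ dist ((cmap F)^[n] (x₀ : Circle1)) x₀)
    (hε1 : M ^ N * (2 * ε) < c) (hε2 : M * (2 * ε) < 1) (hδ : K * (2 * δ) ≤ ε / 9)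
    (hκ : (M * (2 * ε) + η) * (K * (1 - r)⁻¹) ≤ 1 / 9)
    (hNb : M * K * (r ^ N * (1 - r)⁻¹) ≤ 1 / 9) (i : Fin d) :
    ∃ φ ∈ D, ∀ x, |x - x₀| ≤ 2 * δ → ∀ j : ℕ → Fin d,
      |deriv (hSum F j φ.1) x - (if j 0 = i then 1 else 0)| ≤ 1 / 3 ∧
      ∀ m : ℕ, 1 ≤ m →
        |deriv (hSumFin F j m φ.1) x - (if j 0 = i then 1 else 0)| ≤ 1 / 3 := by
  have hM0 : 0 ≤ M := by linarith [h.M_ge]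
  have hK := h.K_pos
  set y := Function.invFun F (x₀ + ((i : ℕ) : ℝ)) with hy
  obtain ⟨φ₀, m₀, hm₀, hφ₀⟩ := h.exists_bump hε (y : Circle1)
  obtain ⟨φ, hφD, hφ⟩ := dense_approx hD φ₀ hη
  set κ := M * (2 * ε) + η with hκdef
  have hκ0 : 0 ≤ κ := by positivity
  refine ⟨φ, hφD, fun x hx j => ?_⟩
  set Dφ := deriv fun x : ℝ => φ.1 x with hDφ
  set t : ℝ → ℝ := fun x => tent ε (y : Circle1) (x : Circle1) with ht
  have ht0 : ∀ x, 0 ≤ t x := fun x => tent_nonneg _ _ _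
  have ht1 : ∀ x, t x ≤ 1 := fun x => tent_le_one hε _ _
  -- `φ'` is `F'` times the tent, up to an error of size `κ`
  have herr : ∀ x, |Dφ x - deriv F x * t x| ≤ κ := by
    intro x
    have h1 := hφ x
    rw [hφ₀] at h1
    have : Dφ x - deriv F x * t x = (Dφ x - (deriv F x * t x - m₀)) + -m₀ := by ring
    rw [this]
    refine (abs_add_le _ _).trans ?_
    rw [abs_neg]
    linarith
  have hmain : ∀ x, |deriv F x * t x| ≤ M := by
    intro x
    rw [abs_of_nonneg (mul_nonneg (h.deriv_pos x).le (ht0 x))]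
    calc deriv F x * t x ≤ M * 1 :=
          mul_le_mul (h.deriv_le x) (ht1 x) (ht0 x) hM0
      _ = M := mul_one M
  have hBd : ∀ x, |Dφ x| ≤ M + κ := by
    intro x
    have : Dφ x = deriv F x * t x + (Dφ x - deriv F x * t x) := by ring
    rw [this]
    exact (abs_add_le _ _).trans (add_le_add (hmain x) (herr x))
  have hdiff : Differentiable ℝ fun x : ℝ => φ.1 x := φ.2.differentiable (by norm_num)
  have hpow : ∀ n : ℕ, K * r ^ (n + 1) ≤ K * r ^ n := fun n =>
    mul_le_mul_of_nonneg_left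
      (pow_le_pow_of_le_one h.r_pos.le h.r_lt.le (Nat.le_succ n)) hK.le
  have htau : ∀ n : ℕ, |deriv (tauIter F j (n + 1)) x| ≤ K * r ^ n := fun n =>
    (h.tau_deriv_le j (n + 1) x).trans (hpow n)
  have hKr : ∀ n : ℕ, 0 ≤ K * r ^ n := fun n => mul_nonneg hK.le (pow_nonneg h.r_pos.le n)
  have herrn : ∀ n : ℕ, |(Dφ (tauIter F j (n + 1) x) -
      deriv F (tauIter F j (n + 1) x) * t (tauIter F j (n + 1) x)) *
        deriv (tauIter F j (n + 1)) x| ≤ κ * (K * r ^ n) := by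
    intro n
    rw [abs_mul]
    exact mul_le_mul (herr _) (htau n) (abs_nonneg _) hκ0
  have hδ' : K * (2 * δ) ≤ ε := by linarith
  have hvanish : ∀ n : ℕ, n < N → (1 ≤ n ∨ j 0 ≠ i) → t (tauIter F j (n + 1) x) = 0 := by
    intro n hn hni
    exact tent_eq_zero hε (h.separation hc hε1 hε2 hδ' hx i j (by omega) (by omega)
      (hni.imp (by omega) id))
  set b : ℕ → ℝ := fun n => κ * (K * r ^ n) + (M * K * (if N ≤ n then r ^ n else 0) +
    (if n = 0 then 1 / 9 else 0)) with hb
  have hbn : ∀ n, κ * (K * r ^ n) + M * K * (if N ≤ n then r ^ n else 0) ≤ b n := by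
    intro n
    simp only [hb]
    have : (0 : ℝ) ≤ if n = 0 then 1 / 9 else 0 := by split_ifs <;> norm_num
    linarith
  refine h.deriv_h_bound hdiff hBd j x _ (partial_sum_bound (b := b) ?_ ?_ ?_)
  · by_cases hji : j 0 = i
    · rw [if_pos hji]
      have hF0 : deriv F (tauIter F j 1 x) ≠ 0 := (h.deriv_pos _).ne'
      have hsplit : Dφ (tauIter F j (0 + 1) x) * deriv (tauIter F j (0 + 1)) x - 1 =
          (Dφ (tauIter F j (0 + 1) x) -
            deriv F (tauIter F j (0 + 1) x) * t (tauIter F j (0 + 1) x)) *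
            deriv (tauIter F j (0 + 1)) x + (t (tauIter F j 1 x) - 1) := by
        rw [zero_add, h.tau_one_deriv]
        field_simp
        ring
      rw [hsplit]
      have h1 : |t (tauIter F j 1 x) - 1| ≤ 1 / 9 := by
        refine (tent_sub_one hε _ _).trans ?_
        rw [div_le_iff₀ hε]
        have hy0 : y = tauIter F j 1 x₀ := by
          simp only [tauIter, hy, hji]
        rw [hy0]
        refine (dist_coe_le _ _).trans ((h.tau_lip j 1 x x₀).trans ?_)
        have h2 := mul_le_mul (hpow 0) hx (abs_nonneg _) (hKr 0)
        rw [zero_add, pow_zero, mul_one] at h2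
        linarith
      have h2 := (abs_add_le _ _).trans (add_le_add (herrn 0) h1)
      refine h2.trans ?_
      simp only [hb, if_true]
      rw [if_neg (by omega)]
      linarith
    · rw [if_neg hji, sub_zero]
      have h1 := herrn 0
      rw [hvanish 0 (by omega) (Or.inr hji), mul_zero, sub_zero] at h1
      refine (h1.trans ?_).trans (hbn 0)
      rw [if_neg (by omega)]
      linarith
  · intro n hn
    by_cases hnN : n < N
    · have h1 := herrn n
      rw [hvanish n hnN (Or.inl hn), mul_zero, sub_zero] at h1
      refine (h1.trans ?_).trans (hbn n)
      rw [if_neg (by omega)]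
      linarith
    · refine le_trans ?_ (hbn n)
      rw [if_pos (by omega), abs_mul]
      have := mul_le_mul (hBd (tauIter F j (n + 1) x)) (htau n) (abs_nonneg _)
        (add_nonneg hM0 hκ0)
      linarith
  · intro m
    simp only [hb]
    rw [Finset.sum_add_distrib, Finset.sum_add_distrib, ← Finset.mul_sum, ← Finset.mul_sum,
      ← Finset.mul_sum]
    have h1 : κ * (K * ∑ n ∈ Finset.range m, r ^ n) ≤ 1 / 9 :=
      le_trans (mul_le_mul_of_nonneg_left
        (mul_le_mul_of_nonneg_left (h.geom_le m) hK.le) hκ0) hκ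
    have h2 : M * K * ∑ n ∈ Finset.range m, (if N ≤ n then r ^ n else 0) ≤ 1 / 9 :=
      le_trans (mul_le_mul_of_nonneg_left (h.tail_sum N m) (mul_nonneg hM0 hK.le)) hNb
    have h3 : ∑ n ∈ Finset.range m, (if n = 0 then (1 / 9 : ℝ) else 0) ≤ 1 / 9 := by
      rw [Finset.sum_ite_eq']
      split_ifs <;> norm_num
    linarith

end GoodLift

/-- Lemma 4.4: construction of the transversal perturbations `φ_{i,q} ∈ 𝓓`. -/
theorem transversal_family (F : ℝ → ℝ) (d : ℕ) (hF : AnalyticExpandingLift F d)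
    (D : Set (CrFun 1)) (hDdense : Dense D)
    (hD2 : ∀ g ∈ D, ContDiff ℝ 2 fun x : ℝ => g.1 ↑x)
    (f0 : CrFun 2)
    (hper : ∀ x ∈ Kset f0.1 (cmap F), ∀ n : ℕ, 1 ≤ n → (cmap F)^[n] x ≠ x) :
    ∃ δ > (0 : ℝ), ∃ Q : ℕ, 0 < Q ∧ ∃ xs : Fin Q → ℝ,
      (∀ q, xs q ∈ Set.Icc (0 : ℝ) 1 ∧ ((xs q : ℝ) : Circle1) ∈ Kset f0.1 (cmap F)) ∧
      ∃ φ : Fin d → Fin Q → CrFun 1, (∀ i q, φ i q ∈ D) ∧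
        ({x : ℝ | x ∈ Set.Icc (0 : ℝ) 1 ∧ ((x : ℝ) : Circle1) ∈ Kset f0.1 (cmap F)} ⊆
          ⋃ q, Set.Ioo (xs q - δ) (xs q + δ)) ∧
        ∀ (x : ℝ) (q : Fin Q), |x - xs q| ≤ 2 * δ →
          ∀ (i : Fin d) (j : ℕ → Fin d),
            ((j 0 = i → |deriv (hSum F j (φ i q).1) x - 1| ≤ 1 / 3) ∧
              (j 0 ≠ i → |deriv (hSum F j (φ i q).1) x| ≤ 1 / 3)) ∧
            ∀ m : ℕ, 1 ≤ m →
              ((j 0 = i → |deriv (hSumFin F j m (φ i q).1) x - 1| ≤ 1 / 3) ∧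
                (j 0 ≠ i → |deriv (hSumFin F j m (φ i q).1) x| ≤ 1 / 3)) := by
  obtain ⟨K, r, M, h⟩ := hF.good
  obtain ⟨L, hL, hf⟩ := exists_lipR (f0.2.of_le (by norm_num))
  have hne := h.kset_nonempty hL hf
  have hcl := h.kset_closed hL hf
  have hM1 := h.M_ge
  have hM0 : 0 < M := by linarith
  have hK := h.K_pos
  have hS : 0 < K * (1 - r)⁻¹ := mul_pos hK (inv_pos.2 (sub_pos.2 h.r_lt))
  -- `N` makes the contribution of the letters after the `N`-th one negligible
  obtain ⟨N, hN, hNb⟩ : ∃ N, 1 ≤ N ∧ M * K * (r ^ N * (1 - r)⁻¹) ≤ 1 / 9 := by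
    have hlim : Tendsto (fun N : ℕ => M * K * (r ^ N * (1 - r)⁻¹)) atTop
        (𝓝 (M * K * (0 * (1 - r)⁻¹))) :=
      ((tendsto_pow_atTop_nhds_zero_of_lt_one h.r_pos.le h.r_lt).mul_const _).const_mul _
    rw [zero_mul, mul_zero] at hlim
    obtain ⟨N, hN, hN'⟩ := ((hlim.eventually (ge_mem_nhds (by norm_num : (0 : ℝ) < 1 / 9))).and
      (eventually_ge_atTop 1)).exists
    exact ⟨N, hN', hN⟩
  -- points of the compact set `K(f₀,T)` are uniformly far from having period at most `N`
  obtain ⟨c, hc0, hc⟩ : ∃ c > 0, ∀ z ∈ Kset f0.1 (cmap F), ∀ n, 1 ≤ n → n ≤ N →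
      c ≤ dist ((cmap F)^[n] z) z := by
    have hn : ∀ n, ∃ c > 0, 1 ≤ n → ∀ z ∈ Kset f0.1 (cmap F), c ≤ dist ((cmap F)^[n] z) z := by
      intro n
      by_cases hn : 1 ≤ n
      · obtain ⟨z, hz, hmin⟩ := hcl.isCompact.exists_isMinOn hne
          ((h.cmap_cont.iterate n).dist continuous_id).continuousOn
        exact ⟨_, dist_pos.2 (hper z hz n hn), fun _ w hw => hmin hw⟩
      · exact ⟨1, one_pos, fun h => absurd h hn⟩
    choose c hc0 hc using hn
    refine ⟨(Finset.Icc 1 N).inf' ⟨1, Finset.mem_Icc.2 ⟨le_rfl, hN⟩⟩ c, ?_, ?_⟩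
    · exact (Finset.lt_inf'_iff _).2 fun n _ => hc0 n
    · intro z hz n h1 h2
      exact (Finset.inf'_le c (Finset.mem_Icc.2 ⟨h1, h2⟩)).trans (hc n h1 z hz)
  have hMN : 0 < M ^ N := pow_pos hM0 N
  obtain ⟨ε, hε, hε1, hε2, hε3⟩ : ∃ ε > 0, M ^ N * (2 * ε) < c ∧ M * (2 * ε) < 1 ∧
      M * (2 * ε) * (K * (1 - r)⁻¹) ≤ 1 / 18 := by
    have hev : ∀ {A B : ℝ}, 0 < B → ∀ᶠ ε : ℝ in 𝓝[>] 0, A * ε < B := by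
      intro A B hB
      have : Tendsto (fun ε : ℝ => A * ε) (𝓝[>] 0) (𝓝 (A * 0)) :=
        ((continuous_const.mul continuous_id).tendsto 0).mono_left nhdsWithin_le_nhds
      rw [mul_zero] at this
      exact this.eventually (gt_mem_nhds hB)
    obtain ⟨ε, ⟨⟨h1, h2⟩, h3⟩, h4⟩ := (((hev (A := M ^ N * 2) hc0).and
      (hev (A := M * 2) one_pos)).and (hev (A := M * 2 * (K * (1 - r)⁻¹))
        (by norm_num : (0 : ℝ) < 1 / 18))).and self_mem_nhdsWithin |>.exists
    exact ⟨ε, h4, by linarith, by linarith, by linarith⟩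
  set η := 1 / 18 / (K * (1 - r)⁻¹) with hη
  have hη0 : 0 < η := by positivity
  have hκ : (M * (2 * ε) + η) * (K * (1 - r)⁻¹) ≤ 1 / 9 := by
    have : η * (K * (1 - r)⁻¹) = 1 / 18 := div_mul_cancel₀ _ hS.ne'
    linarith
  set δ := ε / 9 / (2 * K) with hδ
  have hδ0 : 0 < δ := by positivity
  have hδ1 : K * (2 * δ) ≤ ε / 9 := by
    rw [hδ]
    apply le_of_eq
    field_simp
  set S := {x : ℝ | x ∈ Set.Icc (0 : ℝ) 1 ∧ ((x : ℝ) : Circle1) ∈ Kset f0.1 (cmap F)} with hSdef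
  have hScomp : IsCompact S :=
    isCompact_Icc.inter_right (hcl.preimage (AddCircle.continuous_mk' 1))
  obtain ⟨s, hsS, hscov⟩ := hScomp.elim_nhds_subcover (fun x => Ioo (x - δ) (x + δ))
    fun x _ => Ioo_mem_nhds (by linarith) (by linarith)
  have hSne : S.Nonempty := by
    obtain ⟨z, hz⟩ := hne
    have hr : ((rep z : ℝ) : Circle1) = z := AddCircle.coe_equivIco
    have hm := (AddCircle.equivIco (1 : ℝ) 0 z).2
    exact ⟨rep z, ⟨hm.1, hm.2.le.trans (zero_add (1 : ℝ)).le⟩, by rw [hr]; exact hz⟩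
  have hcard : 0 < s.card := by
    rw [Finset.card_pos]
    obtain ⟨x, hx⟩ := hSne
    obtain ⟨y, hy, -⟩ := mem_iUnion₂.1 (hscov hx)
    exact ⟨y, hy⟩
  let xs : Fin s.card → ℝ := fun q => (s.equivFin.symm q : ℝ)
  have hxs : ∀ q, xs q ∈ S := fun q => hsS _ (s.equivFin.symm q).2
  have hloc := fun (i : Fin d) (q : Fin s.card) => h.exists_local (δ := δ) hDdense hN hε hη0
    (hc _ (hxs q).2) hε1 hε2 hδ1 hκ hNb i
  choose φ hφD hφ using hloc
  refine ⟨δ, hδ0, s.card, hcard, xs, hxs, φ, hφD, ?_, ?_⟩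
  · intro x hx
    obtain ⟨y, hy, hxy⟩ := mem_iUnion₂.1 (hscov hx)
    refine mem_iUnion.2 ⟨s.equivFin ⟨y, hy⟩, ?_⟩
    simpa [xs] using hxy
  · intro x q hx i j
    obtain ⟨h1, h2⟩ := hφ i q x hx j
    refine ⟨⟨fun hj => ?_, fun hj => ?_⟩, fun m hm => ⟨fun hj => ?_, fun hj => ?_⟩⟩
    · simpa only [if_pos hj] using h1
    · simpa only [if_neg hj, sub_zero] using h1
    · simpa only [if_pos hj] using h2 m hm
    · simpa only [if_neg hj, sub_zero] using h2 m hm
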